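/- arXiv:2403.14319 — 2 statements merged into one kernel-verified Lean document; each statement's English description precedes it below -/
import Mathlib

section
/- Under assumptions (1), (2), (3) on the quadratic integrals of the geodesic flow, for almost every x ∈ U (with respect to Lebesgue measure on ℝⁿ) the matrices K_1(x), K_2(x), …, K_n(x) are linearly independent in the real vector space of n×n matrices. -/
open MeasureTheory Matrix

/-- The canonical Poisson bracket on the phase space `(Fin n → ℝ) × (Fin n → ℝ)`
with coordinates `(x, p)`:
`{f, h}(x,p) = ∑ i, (∂f/∂x_i · ∂h/∂p_i − ∂f/∂p_i · ∂h/∂x_i)`. -/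
noncomputable def poisson {n : ℕ} (f h : (Fin n → ℝ) × (Fin n → ℝ) → ℝ)
    (z : (Fin n → ℝ) × (Fin n → ℝ)) : ℝ :=
  ∑ i : Fin n,
    (fderiv ℝ f z (Pi.single i 1, 0) * fderiv ℝ h z (0, Pi.single i 1)
      - fderiv ℝ f z (0, Pi.single i 1) * fderiv ℝ h z (Pi.single i 1, 0))


/-! ### Smooth functions on an open set -/

abbrev Sm {n : ℕ} (U : Set (Fin n → ℝ)) (f : (Fin n → ℝ) → ℝ) : Prop :=
  ContDiffOn ℝ ((⊤ : ℕ∞) : WithTop ℕ∞) f U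

theorem Sm.diffAt {n : ℕ} {U : Set (Fin n → ℝ)} (hU : IsOpen U) {f : (Fin n → ℝ) → ℝ}
    (hf : Sm U f) {x} (hx : x ∈ U) : DifferentiableAt ℝ f x :=
  (hf.contDiffAt (hU.mem_nhds hx)).differentiableAt (by simp)

theorem Sm.sum {n : ℕ} {U : Set (Fin n → ℝ)} {ι : Type*} {s : Finset ι}
    {f : ι → (Fin n → ℝ) → ℝ} (hf : ∀ i, Sm U (f i)) : Sm U (fun x => ∑ i ∈ s, f i x) :=
  ContDiffOn.sum fun i _ => hf i

theorem sm_det {n : ℕ} {U : Set (Fin n → ℝ)} {m : Type*} [Fintype m] [DecidableEq m]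
    {A : (Fin n → ℝ) → Matrix m m ℝ} (hA : ∀ i j, Sm U (fun x => A x i j)) :
    Sm U (fun x => (A x).det) := by
  simp only [Matrix.det_apply]
  refine Sm.sum fun σ => ?_
  refine ContDiffOn.const_smul _ ?_
  exact contDiffOn_prod fun i _ => hA _ _

theorem sm_inv {n : ℕ} {U : Set (Fin n → ℝ)} {m : Type*} [Fintype m] [DecidableEq m]
    {A : (Fin n → ℝ) → Matrix m m ℝ} (hA : ∀ i j, Sm U (fun x => A x i j))
    (h0 : ∀ x ∈ U, (A x).det ≠ 0) (i j : m) :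
    Sm U (fun x => (A x)⁻¹ i j) := by
  have h : (fun x => (A x)⁻¹ i j) =
      fun x => (A x).det⁻¹ * ((A x).updateRow j (Pi.single i 1)).det := by
    funext x
    rw [Matrix.inv_def, Matrix.smul_apply, Matrix.adjugate_apply, Ring.inverse_eq_inv', smul_eq_mul]
  rw [h]
  refine ((sm_det hA).inv h0).mul (sm_det fun a b => ?_)
  by_cases hj : a = j
  · subst hj
    simp only [Matrix.updateRow_self]
    exact contDiffOn_const
  · simp only [Matrix.updateRow_ne hj]
    exact hA a b

/-! ### the frame derivations -/

noncomputable def DD {n : ℕ} (G : (Fin n → ℝ) → Matrix (Fin n) (Fin n) ℝ) (k : Fin n)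
    (f : (Fin n → ℝ) → ℝ) (x : Fin n → ℝ) : ℝ := fderiv ℝ f x (G x k)

theorem sm_pd {n : ℕ} {U : Set (Fin n → ℝ)} (hU : IsOpen U) {f : (Fin n → ℝ) → ℝ}
    (hf : Sm U f) (w : (Fin n → ℝ)) : Sm U (fun x => fderiv ℝ f x w) :=
  (hf.fderiv_of_isOpen hU (m := ((⊤ : ℕ∞) : WithTop ℕ∞)) (by simp)).clm_apply contDiffOn_const

theorem sm_row {n : ℕ} {U : Set (Fin n → ℝ)} {G : (Fin n → ℝ) → Matrix (Fin n) (Fin n) ℝ}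
    (hG : ∀ i j, Sm U (fun x => G x i j)) (k : Fin n) :
    ContDiffOn ℝ ((⊤ : ℕ∞) : WithTop ℕ∞) (fun x => (G x k : Fin n → ℝ)) U :=
  contDiffOn_pi.2 fun j => hG k j

theorem sm_DD {n : ℕ} {U : Set (Fin n → ℝ)} (hU : IsOpen U)
    {G : (Fin n → ℝ) → Matrix (Fin n) (Fin n) ℝ}
    (hG : ∀ i j, Sm U (fun x => G x i j)) {f : (Fin n → ℝ) → ℝ}
    (hf : Sm U f) (k : Fin n) : Sm U (DD G k f) :=
  (hf.fderiv_of_isOpen hU (m := ((⊤ : ℕ∞) : WithTop ℕ∞)) (by simp)).clm_apply (sm_row hG k)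

theorem DD_congr {n : ℕ} {U : Set (Fin n → ℝ)} (hU : IsOpen U)
    {G : (Fin n → ℝ) → Matrix (Fin n) (Fin n) ℝ} {f g : (Fin n → ℝ) → ℝ}
    (h : ∀ x ∈ U, f x = g x) (k : Fin n) {x} (hx : x ∈ U) : DD G k f x = DD G k g x := by
  have : f =ᶠ[nhds x] g := Filter.eventually_of_mem (hU.mem_nhds hx) h
  simp only [DD, this.fderiv_eq]

theorem DD_sum_mul {n : ℕ} {U : Set (Fin n → ℝ)} (hU : IsOpen U)
    {G : (Fin n → ℝ) → Matrix (Fin n) (Fin n) ℝ} {ι : Type*} [Fintype ι]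
    {c J : ι → (Fin n → ℝ) → ℝ}
    (hc : ∀ t, Sm U (c t)) (hJ : ∀ t, Sm U (J t)) (k : Fin n) {x} (hx : x ∈ U) :
    DD G k (fun y => ∑ t, c t y * J t y) x
      = ∑ t, (c t x * DD G k (J t) x + DD G k (c t) x * J t x) := by
  have h : ∀ t ∈ Finset.univ, DifferentiableAt ℝ (fun y => c t y * J t y) x := fun t _ =>
    ((hc t).diffAt hU hx).mul ((hJ t).diffAt hU hx)
  unfold DD
  rw [fderiv_fun_sum h, _root_.sum_apply]
  refine Finset.sum_congr rfl fun t _ => ?_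
  rw [fderiv_fun_mul ((hc t).diffAt hU hx) ((hJ t).diffAt hU hx)]
  simp [mul_comm]

theorem fderiv_eq_sum_DD {n : ℕ} {G : (Fin n → ℝ) → Matrix (Fin n) (Fin n) ℝ}
    {f : (Fin n → ℝ) → ℝ} {x : Fin n → ℝ} (h0 : (G x).det ≠ 0) (w : Fin n → ℝ) :
    fderiv ℝ f x w = ∑ m, Matrix.vecMul w (G x)⁻¹ m * DD G m f x := by
  have hw : w = ∑ m, Matrix.vecMul w (G x)⁻¹ m • (G x m : Fin n → ℝ) := by
    have h1 : Matrix.vecMul (Matrix.vecMul w (G x)⁻¹) (G x) = w := by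
      rw [Matrix.vecMul_vecMul, Matrix.nonsing_inv_mul _ (isUnit_iff_ne_zero.2 h0), Matrix.vecMul_one]
    rw [Matrix.vecMul_eq_sum] at h1
    exact h1.symm
  conv_lhs => rw [hw]
  simp [DD]

/-! ### differential spans -/

def Sp {n : ℕ} (U : Set (Fin n → ℝ)) {ι : Type*} [Fintype ι] (J : ι → (Fin n → ℝ) → ℝ) :
    Submodule ℝ ((Fin n → ℝ) → ℝ) where
  carrier := {f | ∃ c : ι → (Fin n → ℝ) → ℝ, (∀ t, Sm U (c t)) ∧
    ∀ x ∈ U, f x = ∑ t, c t x * J t x}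
  zero_mem' := ⟨fun _ _ => 0, fun _ => contDiffOn_const, by simp⟩
  add_mem' := by
    rintro f g ⟨c, hc, hf⟩ ⟨d, hd, hg⟩
    refine ⟨fun t x => c t x + d t x, fun t => (hc t).add (hd t), fun x hx => ?_⟩
    simp [hf x hx, hg x hx, add_mul, Finset.sum_add_distrib]
  smul_mem' := by
    rintro a f ⟨c, hc, hf⟩
    refine ⟨fun t x => a * c t x, fun t => contDiffOn_const.mul (hc t), fun x hx => ?_⟩
    simp [hf x hx, Finset.mul_sum, mul_assoc]

theorem Sp.gen {n : ℕ} {U : Set (Fin n → ℝ)} {ι : Type*} [Fintype ι]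
    (J : ι → (Fin n → ℝ) → ℝ) (t : ι) : J t ∈ Sp U J := by
  classical
  refine ⟨fun s _ => if s = t then 1 else 0, fun _ => contDiffOn_const, fun x hx => ?_⟩
  simp

theorem Sp.mul {n : ℕ} {U : Set (Fin n → ℝ)} {ι : Type*} [Fintype ι]
    {J : ι → (Fin n → ℝ) → ℝ} {a f : (Fin n → ℝ) → ℝ} (ha : Sm U a) (hf : f ∈ Sp U J) :
    (fun x => a x * f x) ∈ Sp U J := by
  obtain ⟨c, hc, h⟩ := hf
  refine ⟨fun t x => a x * c t x, fun t => ha.mul (hc t), fun x hx => ?_⟩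
  simp [h x hx, Finset.mul_sum, mul_assoc]

theorem Sp.congr {n : ℕ} {U : Set (Fin n → ℝ)} {ι : Type*} [Fintype ι]
    {J : ι → (Fin n → ℝ) → ℝ} {f g : (Fin n → ℝ) → ℝ} (hf : f ∈ Sp U J)
    (h : ∀ x ∈ U, g x = f x) : g ∈ Sp U J := by
  obtain ⟨c, hc, h'⟩ := hf
  exact ⟨c, hc, fun x hx => (h x hx).trans (h' x hx)⟩

theorem Sp.sum {n : ℕ} {U : Set (Fin n → ℝ)} {ι κ : Type*} [Fintype ι]
    {J : ι → (Fin n → ℝ) → ℝ} {s : Finset κ} {f : κ → (Fin n → ℝ) → ℝ}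
    (hf : ∀ k, f k ∈ Sp U J) : (fun x => ∑ k ∈ s, f k x) ∈ Sp U J := by
  have := Submodule.sum_mem (Sp U J) (t := s) (f := f) (fun k _ => hf k)
  convert this using 1
  funext x
  simp

theorem Sp.trans {n : ℕ} {U : Set (Fin n → ℝ)} {ι κ : Type*} [Fintype ι] [Fintype κ]
    {J : ι → (Fin n → ℝ) → ℝ} {J' : κ → (Fin n → ℝ) → ℝ} {f : (Fin n → ℝ) → ℝ}
    (hf : f ∈ Sp U J) (h : ∀ t, J t ∈ Sp U J') : f ∈ Sp U J' := by
  obtain ⟨c, hc, h'⟩ := hf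
  exact Sp.congr (Sp.sum (s := Finset.univ) fun t => Sp.mul (hc t) (h t)) h'

theorem Sp.zero {n : ℕ} {U : Set (Fin n → ℝ)} {ι : Type*} [Fintype ι]
    {J : ι → (Fin n → ℝ) → ℝ} {f : (Fin n → ℝ) → ℝ} (hf : f ∈ Sp U J) {x} (hx : x ∈ U)
    (h : ∀ t, J t x = 0) : f x = 0 := by
  obtain ⟨c, hc, h'⟩ := hf
  simp [h' x hx, h]

theorem Sp.sm {n : ℕ} {U : Set (Fin n → ℝ)} {ι : Type*} [Fintype ι]
    {J : ι → (Fin n → ℝ) → ℝ} {f : (Fin n → ℝ) → ℝ} (hf : f ∈ Sp U J)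
    (h : ∀ t, Sm U (J t)) : Sm U f := by
  obtain ⟨c, hc, h'⟩ := hf
  exact (Sm.sum (s := Finset.univ) fun t => (hc t).mul (h t)).congr h'

/-- prolongation -/
noncomputable def Pr {n : ℕ} (G : (Fin n → ℝ) → Matrix (Fin n) (Fin n) ℝ) {ι : Type*}
    (J : ι → (Fin n → ℝ) → ℝ) : ι ⊕ (Fin n × ι) → (Fin n → ℝ) → ℝ :=
  Sum.elim J (fun kt => DD G kt.1 (J kt.2))

theorem sm_Pr {n : ℕ} {U : Set (Fin n → ℝ)} (hU : IsOpen U)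
    {G : (Fin n → ℝ) → Matrix (Fin n) (Fin n) ℝ}
    (hG : ∀ i j, Sm U (fun x => G x i j)) {ι : Type*} {J : ι → (Fin n → ℝ) → ℝ}
    (hJ : ∀ t, Sm U (J t)) : ∀ t, Sm U (Pr G J t) := by
  rintro (t | ⟨k, t⟩)
  · exact hJ t
  · exact sm_DD hU hG (hJ t) k

theorem Sp.up {n : ℕ} {U : Set (Fin n → ℝ)}
    (G : (Fin n → ℝ) → Matrix (Fin n) (Fin n) ℝ) {ι : Type*} [Fintype ι]
    {J : ι → (Fin n → ℝ) → ℝ} {f : (Fin n → ℝ) → ℝ} (hf : f ∈ Sp U J) :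
    f ∈ Sp U (Pr G J) :=
  Sp.trans hf fun t => Sp.gen (Pr G J) (Sum.inl t)

theorem Sp.deriv {n : ℕ} {U : Set (Fin n → ℝ)} (hU : IsOpen U)
    {G : (Fin n → ℝ) → Matrix (Fin n) (Fin n) ℝ}
    (hG : ∀ i j, Sm U (fun x => G x i j)) {ι : Type*} [Fintype ι]
    {J : ι → (Fin n → ℝ) → ℝ} (hJ : ∀ t, Sm U (J t)) {f : (Fin n → ℝ) → ℝ}
    (hf : f ∈ Sp U J) (k : Fin n) : DD G k f ∈ Sp U (Pr G J) := by
  obtain ⟨c, hc, h⟩ := hf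
  refine Sp.congr (Sp.sum (s := Finset.univ) fun t =>
    Submodule.add_mem _ (Sp.mul (hc t) (Sp.gen (Pr G J) (Sum.inr (k, t))))
      (Sp.mul (sm_DD hU hG (hc t) k) (Sp.gen (Pr G J) (Sum.inl t)))) fun x hx => ?_
  rw [DD_congr hU h k hx, DD_sum_mul hU hc hJ k hx]
  rfl

theorem Sp.prolong {n : ℕ} {U : Set (Fin n → ℝ)} (hU : IsOpen U)
    {G : (Fin n → ℝ) → Matrix (Fin n) (Fin n) ℝ}
    (hG : ∀ i j, Sm U (fun x => G x i j)) {ι κ : Type*} [Fintype ι]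
    {J : ι → (Fin n → ℝ) → ℝ} (hJ : ∀ t, Sm U (J t)) {F : κ → (Fin n → ℝ) → ℝ}
    (hF : ∀ s, F s ∈ Sp U J) : ∀ s, Pr G F s ∈ Sp U (Pr G J) := by
  rintro (s | ⟨k, s⟩)
  · exact Sp.up G (hF s)
  · exact Sp.deriv hU hG hJ (hF s) k

/-- commutators of the frame -/
theorem Sp.comm {n : ℕ} {U : Set (Fin n → ℝ)} (hU : IsOpen U)
    {G : (Fin n → ℝ) → Matrix (Fin n) (Fin n) ℝ}
    (hG : ∀ i j, Sm U (fun x => G x i j)) (h0 : ∀ x ∈ U, (G x).det ≠ 0)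
    {f : (Fin n → ℝ) → ℝ} (hf : Sm U f) (a b : Fin n) :
    DD G a (DD G b f) - DD G b (DD G a f) ∈ Sp U (fun m => DD G m f) := by
  have key : ∀ a b, ∀ x ∈ U, DD G a (DD G b f) x =
      fderiv ℝ (fderiv ℝ f) x (G x a) (G x b) + fderiv ℝ f x (fun l => DD G a (fun y => G y b l) x) := by
    intro a b x hx
    have h1 : DifferentiableAt ℝ (fderiv ℝ f) x :=
      ((hf.fderiv_of_isOpen hU (m := ((⊤ : ℕ∞) : WithTop ℕ∞)) (by simp)).contDiffAt
        (hU.mem_nhds hx)).differentiableAt (by simp)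
    have h2 : DifferentiableAt ℝ (fun y => (G y b : Fin n → ℝ)) x :=
      ((sm_row hG b).contDiffAt (hU.mem_nhds hx)).differentiableAt (by simp)
    have h3 := (h1.hasFDerivAt.clm_apply h2.hasFDerivAt).fderiv
    have h4 : DD G a (DD G b f) x =
      fderiv ℝ (fun y => fderiv ℝ f y (G y b : Fin n → ℝ)) x (G x a) := rfl
    rw [h4, h3]
    have h5 : fderiv ℝ (fun y => (G y b : Fin n → ℝ)) x (G x a)
        = fun l => DD G a (fun y => G y b l) x := by
      rw [fderiv_pi fun l => (hG b l).diffAt hU hx]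
      rfl
    simp [h5, add_comm]
  refine ⟨fun m x => ∑ l, (DD G a (fun y => G y b l) x - DD G b (fun y => G y a l) x)
    * (G x)⁻¹ l m, fun m => Sm.sum fun l => ((sm_DD hU hG (hG b l) a).sub
      (sm_DD hU hG (hG a l) b)).mul (sm_inv hG h0 l m), fun x hx => ?_⟩
  have hs : IsSymmSndFDerivAt ℝ f x :=
    (hf.contDiffAt (hU.mem_nhds hx)).isSymmSndFDerivAt
      (by simp only [minSmoothness_of_isRCLikeNormedField]; exact WithTop.coe_le_coe.2 le_top)
  rw [Pi.sub_apply, key a b x hx, key b a x hx, hs.eq (G x a) (G x b), add_sub_add_left_eq_sub,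
    ← map_sub, fderiv_eq_sum_DD (h0 x hx)]
  rfl

/-! ### unique continuation for closed linear first-order systems -/

theorem uniq_local {n : ℕ} {U : Set (Fin n → ℝ)} (hU : IsOpen U)
    {G : (Fin n → ℝ) → Matrix (Fin n) (Fin n) ℝ}
    (hG : ∀ i j, Sm U (fun x => G x i j)) (h0 : ∀ x ∈ U, (G x).det ≠ 0)
    {ι : Type*} [Fintype ι] {J : ι → (Fin n → ℝ) → ℝ} (hJ : ∀ t, Sm U (J t))
    (hcl : ∀ k t, DD G k (J t) ∈ Sp U J) {x : Fin n → ℝ} (hx : x ∈ U)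
    (hx0 : ∀ t, J t x = 0) : ∀ᶠ y in nhds x, y ∈ U ∧ ∀ t, J t y = 0 := by
  choose c hc hcJ using hcl
  obtain ⟨r, hr, hrU⟩ := Metric.isOpen_iff.1 hU x hx
  refine Filter.eventually_of_mem (Metric.ball_mem_nhds x hr) fun y hy => ⟨hrU hy, ?_⟩
  set w := y - x with hw
  set γ : ℝ → (Fin n → ℝ) := fun s => x + s • w with hγ
  have hγU : ∀ s ∈ Set.Icc (0:ℝ) 1, γ s ∈ U := by
    intro s hs
    refine hrU ?_
    have := (convex_ball x r).add_smul_sub_mem (Metric.mem_ball_self hr) hy hs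
    exact this
  have hγc : Continuous γ := by fun_prop
  have hγd : ∀ s, HasDerivAt γ w s := by
    intro s
    have := ((hasDerivAt_id s).smul_const w).const_add x
    simp only [one_smul, id] at this
    exact this
  set a : ι → ι → ℝ → ℝ := fun t u s =>
    ∑ m, (∑ l, w l * (G (γ s))⁻¹ l m) * c m t u (γ s) with ha
  have hac : ∀ t u, ContinuousOn (a t u) (Set.Icc 0 1) := by
    intro t u
    have h1 : Sm U (fun z => ∑ m, (∑ l, w l * (G z)⁻¹ l m) * c m t u z) :=
      Sm.sum fun m => (Sm.sum fun l => contDiffOn_const.mul (sm_inv hG h0 l m)).mul (hc m t u)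
    exact h1.continuousOn.comp hγc.continuousOn hγU
  have hφ : ContinuousOn (fun s => ∑ t, ∑ u, |a t u s|) (Set.Icc 0 1) :=
    continuousOn_finsetSum _ fun t _ => continuousOn_finsetSum _ fun u _ => (hac t u).abs
  obtain ⟨C, hC⟩ := isCompact_Icc.exists_bound_of_continuousOn hφ
  have hd : ∀ s ∈ Set.Icc (0:ℝ) 1, HasDerivAt (fun s => fun t => J t (γ s))
      (fun t => ∑ u, a t u s * J u (γ s)) s := by
    intro s hs
    rw [hasDerivAt_pi]
    intro t
    have h1 := ((hJ t).diffAt hU (hγU s hs)).hasFDerivAt.comp_hasDerivAt s (hγd s)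
    refine HasDerivAt.congr_deriv h1 (Eq.symm ?_)
    rw [fderiv_eq_sum_DD (h0 _ (hγU s hs))]
    simp only [ha, Finset.sum_mul]
    rw [Finset.sum_comm]
    refine Finset.sum_congr rfl fun m _ => ?_
    rw [hcJ m t _ (hγU s hs), Finset.mul_sum]
    refine Finset.sum_congr rfl fun u _ => ?_
    rw [← Finset.sum_mul, ← mul_assoc]
    congr 1
    rw [← Finset.sum_mul]
    rfl
  have := eq_zero_of_abs_deriv_le_mul_abs_self_of_eq_zero_right (K := C) (a := 0) (b := 1)
    (f := fun s => fun t => J t (γ s)) (f' := fun s => fun t => ∑ u, a t u s * J u (γ s))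
    (fun s hs => (hd s hs).continuousAt.continuousWithinAt)
    (fun s hs => (hd s ⟨hs.1, hs.2.le⟩).hasDerivWithinAt)
    (by funext t; simp [hγ, hx0]) (by
      intro s hs
      have hs' : s ∈ Set.Icc (0:ℝ) 1 := ⟨hs.1, hs.2.le⟩
      have hCs := hC s hs'
      rw [Real.norm_of_nonneg (by positivity)] at hCs
      have hC0 : 0 ≤ C := le_trans (by positivity) hCs
      refine (pi_norm_le_iff_of_nonneg (by positivity)).2 fun t => ?_
      calc ‖∑ u, a t u s * J u (γ s)‖ ≤ ∑ u, ‖a t u s * J u (γ s)‖ := norm_sum_le _ _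
        _ ≤ ∑ u, |a t u s| * ‖fun t => J t (γ s)‖ := by
            refine Finset.sum_le_sum fun u _ => ?_
            rw [norm_mul]
            exact mul_le_mul_of_nonneg_left (norm_le_pi_norm (fun t => J t (γ s)) u) (norm_nonneg _)
        _ = (∑ u, |a t u s|) * ‖fun t => J t (γ s)‖ := by rw [Finset.sum_mul]
        _ ≤ C * ‖fun t => J t (γ s)‖ := by
            refine mul_le_mul_of_nonneg_right (le_trans ?_ hCs) (norm_nonneg _)
            exact Finset.single_le_sum (f := fun t => ∑ u, |a t u s|)
              (fun t _ => by positivity) (Finset.mem_univ t))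
    1 ⟨zero_le_one, le_rfl⟩
  intro t
  have h2 := congrFun this t
  simpa [hγ, hw] using h2

theorem uniq_global {n : ℕ} {U : Set (Fin n → ℝ)} (hU : IsOpen U) (hUc : IsPreconnected U)
    {G : (Fin n → ℝ) → Matrix (Fin n) (Fin n) ℝ}
    (hG : ∀ i j, Sm U (fun x => G x i j)) (h0 : ∀ x ∈ U, (G x).det ≠ 0)
    {ι : Type*} [Fintype ι] {J : ι → (Fin n → ℝ) → ℝ} (hJ : ∀ t, Sm U (J t))
    (hcl : ∀ k t, DD G k (J t) ∈ Sp U J) {x : Fin n → ℝ} (hx : x ∈ U)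
    (hx0 : ∀ t, J t x = 0) : ∀ y ∈ U, ∀ t, J t y = 0 := by
  have hsub : U ⊆ {y | y ∈ U ∧ ∀ t, J t y = 0} := by
    refine hUc.subset_of_closure_inter_subset ?_ ⟨x, hx, hx, hx0⟩ ?_
    · rw [isOpen_iff_mem_nhds]
      rintro y ⟨hy, hy0⟩
      exact uniq_local hU hG h0 hJ hcl hy hy0
    · rintro y ⟨hy, hyU⟩
      refine ⟨hyU, fun t => ?_⟩
      by_contra hne
      have h1 := ((hJ t).diffAt hU hyU).continuousAt.eventually_ne hne
      obtain ⟨z, hz1, hz2⟩ := mem_closure_iff_nhds.1 hy _ h1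
      exact hz1 (hz2.2 t)
  exact fun y hy => (hsub hy).2

/-! ### Killing tensors are of finite type -/

theorem petersen {n : ℕ} {Q : Type*} [AddCommGroup Q] [Module ℝ Q]
    (u : Fin n → Fin n → Fin n → Fin n → Fin n → Q)
    (s1 : ∀ a b c i j, u a b c i j = u b a c i j)
    (s2 : ∀ a b c i j, u a b c i j = u a c b i j)
    (s3 : ∀ a b c i j, u a b c i j = u a b c j i)
    (e : ∀ a b k i j, u a b k i j + u a b i j k + u a b j k i = 0) (a b c i j : Fin n) :
    u a b c i j = 0 := by
  have r1 := e a b c i j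
  have r2 := e a c b i j
  have r3 := e b c a i j
  have r4 := e i j a b c
  have r5 := e a i b c j
  have r6 := e b i a c j
  have r7 := e c i a b j
  have r8 := e a j b c i
  have r9 := e b j a c i
  have r10 := e c j a b i
  rw [s3 a b i j c, s3 a b c i j] at r1
  rw [s2 a c b i j, s3 a c i j b, s3 a b c i j] at r2
  rw [s2 b c a i j, s1 b a c i j, s3 b c i j a, s3 a b c i j] at r3
  have p1 : ∀ x y z k l, u x y z k l = u z x y k l := fun x y z k l => by
    rw [s2 x y z, s1 x z y]
  rw [p1 i j a, p1 i j b, p1 i j c, s3 c i j a b, s3 b i j c a] at r4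
  rw [s2 a i b, s2 a i c, s3 a c i j b, s2 a i j, s2 a j i] at r5
  rw [p1 b i a, s2 b i c, s3 b c i j a] at r6
  rw [p1 c i a, p1 c i b, s3 b c i j a, s3 c i j a b] at r7
  rw [s2 a j b, s2 a j c, s3 a c j i b, s2 a j i] at r8
  rw [p1 b j a, s2 b j c, s3 b c j i a, s2 b j i] at r9
  rw [p1 c j a, p1 c j b, s3 b c j i a, s2 c j i, s3 c i j a b] at r10
  rw [s3 a b c i j]
  linear_combination (norm := module) (1/3 : ℝ) • r1 + (1/3 : ℝ) • r2 + (1/3 : ℝ) • r3 + (1/3 : ℝ) • r4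
    - (1/6 : ℝ) • r5 - (1/6 : ℝ) • r6 - (1/6 : ℝ) • r7 - (1/6 : ℝ) • r8 - (1/6 : ℝ) • r9
    - (1/6 : ℝ) • r10

theorem DD_sub {n : ℕ} {U : Set (Fin n → ℝ)} (hU : IsOpen U)
    {G : (Fin n → ℝ) → Matrix (Fin n) (Fin n) ℝ} {f g : (Fin n → ℝ) → ℝ}
    (hf : Sm U f) (hg : Sm U g) (k : Fin n) {x} (hx : x ∈ U) :
    DD G k (f - g) x = DD G k f x - DD G k g x := by
  unfold DD
  rw [fderiv_sub (hf.diffAt hU hx) (hg.diffAt hU hx)]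
  rfl

theorem DD_add {n : ℕ} {U : Set (Fin n → ℝ)} (hU : IsOpen U)
    {G : (Fin n → ℝ) → Matrix (Fin n) (Fin n) ℝ} {f g : (Fin n → ℝ) → ℝ}
    (hf : Sm U f) (hg : Sm U g) (k : Fin n) {x} (hx : x ∈ U) :
    DD G k (f + g) x = DD G k f x + DD G k g x := by
  unfold DD
  rw [fderiv_add (hf.diffAt hU hx) (hg.diffAt hU hx)]
  rfl

theorem DD_add3 {n : ℕ} {U : Set (Fin n → ℝ)} (hU : IsOpen U)
    {G : (Fin n → ℝ) → Matrix (Fin n) (Fin n) ℝ} {f g h : (Fin n → ℝ) → ℝ}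
    (hf : Sm U f) (hg : Sm U g) (hh : Sm U h) (k : Fin n) {x} (hx : x ∈ U) :
    DD G k (f + g + h) x = DD G k f x + DD G k g x + DD G k h x := by
  have hfg : Sm U (f + g) := hf.add hg
  rw [DD_add hU hfg hh k hx, DD_add hU hf hg k hx]

theorem closed_sys {n : ℕ} {U : Set (Fin n → ℝ)} (hU : IsOpen U)
    {G : (Fin n → ℝ) → Matrix (Fin n) (Fin n) ℝ}
    (hG : ∀ i j, Sm U (fun x => G x i j)) (h0 : ∀ x ∈ U, (G x).det ≠ 0)
    {L : Fin n × Fin n → (Fin n → ℝ) → ℝ} (hL : ∀ t, Sm U (L t))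
    (hsym : ∀ i j, ∀ x ∈ U, L (i, j) x = L (j, i) x)
    (hkil : ∀ k i j, DD G k (L (i, j)) + DD G i (L (j, k)) + DD G j (L (k, i)) ∈ Sp U L) :
    ∀ k t, DD G k (Pr G (Pr G L) t) ∈ Sp U (Pr G (Pr G L)) := by
  have hL1 := sm_Pr hU hG hL
  have hD := fun t k => sm_DD hU hG (hL t) k
  have hDD := fun t k l => sm_DD hU hG (hD t k) l
  rintro k (s | ⟨b, (t | ⟨c, t⟩)⟩)
  · exact Sp.gen (Pr G (Pr G L)) (Sum.inr (k, s))
  · exact Sp.gen (Pr G (Pr G L)) (Sum.inr (k, Sum.inr (b, t)))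
  · obtain ⟨i, j⟩ := t
    let S := Sp U (Pr G (Pr G L))
    let u : Fin n → Fin n → Fin n → Fin n → Fin n → (((Fin n → ℝ) → ℝ) ⧸ S) :=
      fun a b c i j => Submodule.Quotient.mk (DD G a (DD G b (DD G c (L (i, j)))))
    have hmk : ∀ f g : (Fin n → ℝ) → ℝ, (∀ x ∈ U, f x = g x) →
        (Submodule.Quotient.mk f : (((Fin n → ℝ) → ℝ) ⧸ S)) = Submodule.Quotient.mk g := by
      intro f g h
      rw [Submodule.Quotient.eq]
      exact Sp.congr (Submodule.zero_mem S) fun x hx => by simp [h x hx]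
    have := petersen u ?_ ?_ ?_ ?_ k b c i j
    · exact (Submodule.Quotient.mk_eq_zero S).1 this
    · intro a b c i j
      rw [Submodule.Quotient.eq]
      exact Sp.trans (Sp.comm hU hG h0 (hD (i, j) c) a b) fun m =>
        Sp.gen (Pr G (Pr G L)) (Sum.inr (m, Sum.inr (c, (i, j))))
    · intro a b c i j
      rw [Submodule.Quotient.eq]
      have h1 : DD G b (DD G c (L (i, j))) - DD G c (DD G b (L (i, j))) ∈ Sp U (Pr G L) :=
        Sp.trans (Sp.comm hU hG h0 (hL (i, j)) b c) fun m =>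
          Sp.gen (Pr G L) (Sum.inr (m, (i, j)))
      exact Sp.congr (Sp.deriv hU hG hL1 h1 a) fun x hx =>
        (DD_sub hU (hDD _ _ _) (hDD _ _ _) a hx).symm
    · intro a b c i j
      exact hmk _ _ fun x hx => DD_congr hU (fun x hx => DD_congr hU (fun x hx =>
        DD_congr hU (hsym i j) c hx) b hx) a hx
    · intro a b k i j
      have h1 := Sp.deriv hU hG hL1 (Sp.deriv hU hG hL (hkil k i j) b) a
      have h2 := (Submodule.Quotient.mk_eq_zero S).2 h1
      rw [← h2]
      simp only [u, ← Submodule.Quotient.mk_add]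
      refine hmk _ _ fun x hx => ?_
      have h3 : ∀ y ∈ U, DD G b (DD G k (L (i, j)) + DD G i (L (j, k)) + DD G j (L (k, i))) y
          = (DD G b (DD G k (L (i, j))) + DD G b (DD G i (L (j, k)))
            + DD G b (DD G j (L (k, i)))) y := by
        intro y hy
        rw [DD_add3 hU (hD _ _) (hD _ _) (hD _ _) b hy]
        rfl
      rw [DD_congr hU h3 a hx, DD_add3 hU (hDD _ _ _) (hDD _ _ _) (hDD _ _ _) a hx]
      rfl

/-! ### vanishing of derivatives almost everywhere on zero sets -/

theorem countable_zeros (s : Set ℝ) (f f' : ℝ → ℝ)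
    (h : ∀ t ∈ s, f t = 0 ∧ HasDerivAt f (f' t) t ∧ f' t ≠ 0) : s.Countable := by
  have h1 := countable_setOfPred_isolated_right_within (s := s)
  refine h1.mono fun t ht => Set.mem_sep ht ?_
  obtain ⟨-, h3, h4⟩ := h t ht
  have h5 := h3.eventually_ne (c := 0) h4
  rw [← Filter.empty_mem_iff_bot]
  have h6 : nhdsWithin t (s ∩ Set.Ioi t) ≤ nhdsWithin t {t}ᶜ :=
    nhdsWithin_mono t fun y hy => ne_of_gt hy.2
  filter_upwards [h6 h5, self_mem_nhdsWithin] with y hy hy2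
  exact hy (h y hy2.1).1

theorem ae_fderiv_dir {n : ℕ} {U : Set (Fin n → ℝ)} (hU : IsOpen U) {f : (Fin n → ℝ) → ℝ}
    (hf : Sm U f) (v : Fin n → ℝ) :
    ∀ᵐ x ∂(volume : Measure (Fin n → ℝ)), x ∈ U → f x = 0 → fderiv ℝ f x v = 0 := by
  set g : (Fin n → ℝ) → ℝ := fun x => fderiv ℝ f x v with hg
  have hgs : Sm U g := sm_pd hU hf v
  have m1 : MeasurableSet (U ∩ f ⁻¹' {0}ᶜ) :=
    (hf.continuousOn.isOpen_inter_preimage hU isOpen_compl_singleton).measurableSet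
  have m2 : MeasurableSet (U ∩ g ⁻¹' {0}ᶜ) :=
    (hgs.continuousOn.isOpen_inter_preimage hU isOpen_compl_singleton).measurableSet
  have hm : MeasurableSet {x | x ∈ U → f x = 0 → g x = 0} := by
    have : {x | x ∈ U → f x = 0 → g x = 0} = ((U ∩ g ⁻¹' {0}ᶜ) \ (U ∩ f ⁻¹' {0}ᶜ))ᶜ := by
      ext x
      simp only [Set.mem_ofPred_eq, Set.mem_compl_iff, Set.mem_sdiff, Set.mem_inter_iff,
        Set.mem_preimage, Set.mem_singleton_iff]
      tauto
    rw [this]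
    exact (m2.diff m1).compl
  refine ae_mem_of_ae_add_linearMap_mem (LinearMap.toSpanSingleton ℝ (Fin n → ℝ) v)
    (volume : Measure ℝ) volume hm fun y => ?_
  have hc : {t : ℝ | y + t • v ∈ U ∧ f (y + t • v) = 0 ∧ g (y + t • v) ≠ 0}.Countable := by
    refine countable_zeros _ (fun t => f (y + t • v)) (fun t => g (y + t • v)) ?_
    rintro t ⟨h1, h2, h3⟩
    refine ⟨h2, ?_, h3⟩
    have h4 : HasDerivAt (fun t : ℝ => y + t • v) v t := by
      have := ((hasDerivAt_id t).smul_const v).const_add y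
      simp only [one_smul, id] at this
      exact this
    exact (hf.diffAt hU h1).hasFDerivAt.comp_hasDerivAt t h4
  filter_upwards [hc.ae_notMem volume] with t ht h1 h2
  by_contra h3
  exact ht ⟨h1, h2, h3⟩

theorem fderiv_expand {n : ℕ} (φ : (Fin n → ℝ) →L[ℝ] ℝ) (w : Fin n → ℝ) :
    φ w = ∑ l, w l * φ (Pi.single l 1) := by
  conv_lhs => rw [pi_eq_sum_univ' w]
  simp [Pi.single]

theorem ae_DD {n : ℕ} {U : Set (Fin n → ℝ)} (hU : IsOpen U)
    (G : (Fin n → ℝ) → Matrix (Fin n) (Fin n) ℝ) {f : (Fin n → ℝ) → ℝ}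
    (hf : Sm U f) {S : Set (Fin n → ℝ)} (hS : S ⊆ U)
    (h : ∀ᵐ x ∂(volume : Measure (Fin n → ℝ)), x ∈ S → f x = 0) (k : Fin n) :
    ∀ᵐ x ∂(volume : Measure (Fin n → ℝ)), x ∈ S → DD G k f x = 0 := by
  have h2 := ae_all_iff.2 fun l : Fin n => ae_fderiv_dir hU hf (Pi.single l 1)
  filter_upwards [h, h2] with x h3 h4 hx
  unfold DD
  rw [fderiv_expand]
  exact Finset.sum_eq_zero fun l _ => by rw [h4 l (hS hx) (h3 hx), mul_zero]

theorem ae_Pr {n : ℕ} {U : Set (Fin n → ℝ)} (hU : IsOpen U)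
    (G : (Fin n → ℝ) → Matrix (Fin n) (Fin n) ℝ) {ι : Type*} {J : ι → (Fin n → ℝ) → ℝ}
    (hJ : ∀ t, Sm U (J t)) {S : Set (Fin n → ℝ)} (hS : S ⊆ U)
    (h : ∀ t, ∀ᵐ x ∂(volume : Measure (Fin n → ℝ)), x ∈ S → J t x = 0) :
    ∀ t, ∀ᵐ x ∂(volume : Measure (Fin n → ℝ)), x ∈ S → Pr G J t x = 0 := by
  rintro (t | ⟨k, t⟩)
  · exact h t
  · exact ae_DD hU G (hJ t) hS (h t) k

/-! ### algebra -/

theorem cubic_polar {n : ℕ} (t : Fin n → Fin n → Fin n → ℝ)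
    (h : ∀ p : Fin n → ℝ, ∑ k, ∑ i, ∑ j, t k i j * p k * p i * p j = 0) (k i j : Fin n) :
    t k i j + t k j i + t i k j + t i j k + t j k i + t j i k = 0 := by
  let τ : (Fin n → ℝ) → (Fin n → ℝ) → (Fin n → ℝ) → ℝ := fun u v w =>
    ∑ k, ∑ i, ∑ j, t k i j * u k * v i * w j
  have a1 : ∀ u u' v w, τ (u + u') v w = τ u v w + τ u' v w := by
    intro u u' v w
    simp only [τ, ← Finset.sum_add_distrib]
    refine Finset.sum_congr rfl fun k _ => Finset.sum_congr rfl fun i _ =>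
      Finset.sum_congr rfl fun j _ => ?_
    simp only [Pi.add_apply]; ring
  have a2 : ∀ u v v' w, τ u (v + v') w = τ u v w + τ u v' w := by
    intro u u' v w
    simp only [τ, ← Finset.sum_add_distrib]
    refine Finset.sum_congr rfl fun k _ => Finset.sum_congr rfl fun i _ =>
      Finset.sum_congr rfl fun j _ => ?_
    simp only [Pi.add_apply]; ring
  have a3 : ∀ u v w w', τ u v (w + w') = τ u v w + τ u v w' := by
    intro u u' v w
    simp only [τ, ← Finset.sum_add_distrib]
    refine Finset.sum_congr rfl fun k _ => Finset.sum_congr rfl fun i _ =>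
      Finset.sum_congr rfl fun j _ => ?_
    simp only [Pi.add_apply]; ring
  have e : ∀ k i j, τ (Pi.single k 1) (Pi.single i 1) (Pi.single j 1) = t k i j := by
    intro k i j
    simp [τ, Pi.single_apply]
  have h' : ∀ p, τ p p p = 0 := h
  have q1 := h' (Pi.single k 1)
  have q2 := h' (Pi.single i 1)
  have q3 := h' (Pi.single j 1)
  have q4 := h' (Pi.single k 1 + Pi.single i 1)
  have q5 := h' (Pi.single k 1 + Pi.single j 1)
  have q6 := h' (Pi.single i 1 + Pi.single j 1)
  have q7 := h' (Pi.single k 1 + Pi.single i 1 + Pi.single j 1)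
  simp only [a1, a2, a3, e] at q1 q2 q3 q4 q5 q6 q7
  linarith

theorem diag_lemma {n : ℕ} (c : Fin n → Fin n → ℝ)
    (h : ∀ q : Fin n → ℝ, ∑ i, (∑ j, c i j * q j) * q i ^ 2 = 0) (i j : Fin n) : c i j = 0 := by
  have hd : ∀ i, c i i = 0 := by
    intro i
    have := h (Pi.single i 1)
    simpa [Pi.single_apply] using this
  by_cases hij : i = j
  · subst hij; exact hd i
  have key : ∀ s t : ℝ, c i j * t * s ^ 2 + c j i * s * t ^ 2 = 0 := by
    intro s t
    have h1 := h (Pi.single i s + Pi.single j t)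
    rw [Fintype.sum_eq_add i j hij] at h1
    · simp [Pi.single_apply, hij, Ne.symm hij, mul_add, Finset.sum_add_distrib, hd] at h1
      linarith
    · intro m hm
      simp [Pi.single_apply, hm.1, hm.2]
  have k1 := key 1 1
  have k2 := key 1 (-1)
  linarith

theorem diag_indep {n : ℕ} {ι : Type*} [Fintype ι] (A : ι → Matrix (Fin n) (Fin n) ℝ)
    (hA : LinearIndependent ℝ A) (B : Matrix (Fin n) (Fin n) ℝ) (hB : IsUnit B)
    (hd : ∀ a, (B * A a * Bᵀ).IsDiag) (y : ι → Fin n → ℝ)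
    (h : ∀ p : Fin n → ℝ, ∑ a, (∑ k, y a k * p k) * (p ⬝ᵥ (A a *ᵥ p)) = 0) (a : ι) (k : Fin n) :
    y a k = 0 := by
  have hdet := (Matrix.isUnit_iff_isUnit_det B).1 hB
  -- coefficients in the diagonal frame
  let ξ : ι → Fin n → ℝ := fun a => B *ᵥ y a
  have h1 : ∀ q : Fin n → ℝ, ∑ i, (∑ j, (∑ a, ξ a j * (B * A a * Bᵀ) i i) * q j) * q i ^ 2 = 0 := by
    intro q
    have h2 := h (Bᵀ *ᵥ q)
    rw [← h2]
    have h3 : ∀ a, (Bᵀ *ᵥ q) ⬝ᵥ (A a *ᵥ (Bᵀ *ᵥ q)) = ∑ i, (B * A a * Bᵀ) i i * q i ^ 2 := by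
      intro a
      have h4 : (Bᵀ *ᵥ q) ⬝ᵥ (A a *ᵥ (Bᵀ *ᵥ q)) = q ⬝ᵥ ((B * A a * Bᵀ) *ᵥ q) := by
        rw [Matrix.mulVec_transpose, ← Matrix.dotProduct_mulVec, Matrix.mulVec_mulVec,
          ← Matrix.mulVec_transpose, Matrix.mulVec_mulVec, Matrix.mul_assoc]
      rw [h4]
      simp only [dotProduct, Matrix.mulVec]
      refine Finset.sum_congr rfl fun i _ => ?_
      rw [Finset.sum_eq_single i]
      · ring
      · intro j _ hj
        rw [hd a (Ne.symm hj), zero_mul]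
      · simp
    have h5 : ∀ a, ∑ k, y a k * (Bᵀ *ᵥ q) k = ∑ j, ξ a j * q j := by
      intro a
      change y a ⬝ᵥ (Bᵀ *ᵥ q) = (B *ᵥ y a) ⬝ᵥ q
      rw [Matrix.dotProduct_mulVec, Matrix.vecMul_transpose]
    simp only [h3, h5, Finset.sum_mul, Finset.mul_sum]
    have : ∀ j i : Fin n, ∑ a, ξ a j * (B * A a * Bᵀ) i i * q j * q i ^ 2
      = ∑ a, ξ a j * q j * ((B * A a * Bᵀ) i i * q i ^ 2) := fun j i =>
        Finset.sum_congr rfl fun a _ => by ring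
    simp only [this]
    calc _ = ∑ i, ∑ a, ∑ j, ξ a j * q j * ((B * A a * Bᵀ) i i * q i ^ 2) :=
          Finset.sum_congr rfl fun i _ => Finset.sum_comm
      _ = ∑ a, ∑ i, ∑ j, ξ a j * q j * ((B * A a * Bᵀ) i i * q i ^ 2) := Finset.sum_comm
  have h2 : ∀ i j, ∑ a, ξ a j * (B * A a * Bᵀ) i i = 0 := diag_lemma _ h1 |> fun h i j => h i j
  have h3 : ∀ j, ∑ a, ξ a j • A a = 0 := by
    intro j
    have h4 : B * (∑ a, ξ a j • A a) * Bᵀ = 0 := by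
      ext i l
      rw [Finset.mul_sum, Finset.sum_mul, Matrix.sum_apply]
      simp only [Matrix.mul_smul, Matrix.smul_mul, Matrix.smul_apply, smul_eq_mul]
      by_cases hil : i = l
      · subst hil; simpa using h2 i j
      · rw [Matrix.zero_apply]
        exact Finset.sum_eq_zero fun a _ => by rw [hd a hil, mul_zero]
    have hBt : IsUnit Bᵀ := Matrix.isUnit_transpose B |>.2 hB
    have h5 := hBt.mul_left_eq_zero.1 h4
    exact hB.mul_right_eq_zero.1 h5
  have h4 : ∀ a, ξ a = 0 := fun a => funext fun j =>
    Fintype.linearIndependent_iff.1 hA (fun a => ξ a j) (h3 j) a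
  have h5 : y a = 0 := by
    have := congrArg (fun z => B⁻¹ *ᵥ z) (h4 a)
    simpa [ξ, Matrix.mulVec_mulVec, Matrix.nonsing_inv_mul _ hdet] using this
  rw [h5]; rfl

/-! ### the Killing equation -/

theorem hasFDerivAt_quad {n : ℕ} {K : (Fin n → ℝ) → Matrix (Fin n) (Fin n) ℝ}
    {x : Fin n → ℝ} (hK : ∀ i j, DifferentiableAt ℝ (fun y => K y i j) x) (p : Fin n → ℝ) :
    ∃ φ : ((Fin n → ℝ) × (Fin n → ℝ)) →L[ℝ] ℝ,
      HasFDerivAt (fun z : (Fin n → ℝ) × (Fin n → ℝ) =>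
        ∑ i : Fin n, ∑ j : Fin n, K z.1 i j * z.2 i * z.2 j) φ (x, p) ∧
      ∀ u q, φ (u, q) = ∑ i, ∑ j, (fderiv ℝ (fun y => K y i j) x u * p i * p j
        + K x i j * q i * p j + K x i j * p i * q j) := by
  have h1 : ∀ i j, HasFDerivAt (fun z : (Fin n → ℝ) × (Fin n → ℝ) => K z.1 i j)
      ((fderiv ℝ (fun y => K y i j) x).comp (ContinuousLinearMap.fst ℝ _ _)) (x, p) := fun i j =>
    HasFDerivAt.comp (g := fun y => K y i j) (x, p) (hK i j).hasFDerivAt hasFDerivAt_fst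
  have h2 : ∀ i, HasFDerivAt (fun z : (Fin n → ℝ) × (Fin n → ℝ) => z.2 i)
      ((ContinuousLinearMap.proj (R := ℝ) (φ := fun _ : Fin n => ℝ) i).comp
        (ContinuousLinearMap.snd ℝ (Fin n → ℝ) (Fin n → ℝ))) (x, p) := fun i =>
    ((ContinuousLinearMap.proj (R := ℝ) (φ := fun _ : Fin n => ℝ) i).comp
        (ContinuousLinearMap.snd ℝ (Fin n → ℝ) (Fin n → ℝ))).hasFDerivAt
  refine ⟨_, HasFDerivAt.fun_sum fun i _ => HasFDerivAt.fun_sum fun j _ =>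
    ((h1 i j).mul (h2 i)).mul (h2 j), ?_⟩
  intro u q
  simp only [_root_.sum_apply]
  refine Finset.sum_congr rfl fun i _ => Finset.sum_congr rfl fun j _ => ?_
  simp
  ring

/-- the Killing equation, as a cubic form -/
def Kil {n : ℕ} (U : Set (Fin n → ℝ)) (G : (Fin n → ℝ) → Matrix (Fin n) (Fin n) ℝ)
    (L : Fin n × Fin n → (Fin n → ℝ) → ℝ) : Prop :=
  ∀ x ∈ U, ∀ p : Fin n → ℝ, ∑ k, ∑ i, ∑ j, (DD G k (L (i, j)) x
    - ∑ l, L (k, l) x * fderiv ℝ (fun y => G y i j) x (Pi.single l 1)) * p k * p i * p j = 0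

theorem kil_of_poisson {n : ℕ} {U : Set (Fin n → ℝ)} (hU : IsOpen U)
    {G K : (Fin n → ℝ) → Matrix (Fin n) (Fin n) ℝ}
    (hG : ∀ i j, Sm U (fun x => G x i j)) (hK : ∀ i j, Sm U (fun x => K x i j))
    (hGs : ∀ x ∈ U, (G x).IsSymm) (hKs : ∀ x ∈ U, (K x).IsSymm)
    (h : ∀ z : (Fin n → ℝ) × (Fin n → ℝ), z.1 ∈ U →
      poisson (fun z => (1 / 2 : ℝ) * ∑ i : Fin n, ∑ j : Fin n, G z.1 i j * z.2 i * z.2 j)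
        (fun z => ∑ i : Fin n, ∑ j : Fin n, K z.1 i j * z.2 i * z.2 j) z = 0) :
    Kil U G (fun t x => K x t.1 t.2) := by
  intro x hx p
  obtain ⟨φ, hφ, hφ'⟩ := hasFDerivAt_quad (K := G) (fun i j => (hG i j).diffAt hU hx) p
  obtain ⟨ψ, hψ, hψ'⟩ := hasFDerivAt_quad (K := K) (fun i j => (hK i j).diffAt hU hx) p
  have h1 := h (x, p) hx
  unfold poisson at h1
  rw [(hφ.const_mul (1 / 2 : ℝ)).fderiv, hψ.fderiv] at h1
  simp only [_root_.smul_apply, smul_eq_mul, hφ', hψ'] at h1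
  -- the vertical derivatives
  have v : ∀ (A : Matrix (Fin n) (Fin n) ℝ), A.IsSymm → ∀ k : Fin n,
      ∑ i, ∑ j, (A i j * (Pi.single k 1 : Fin n → ℝ) i * p j
        + A i j * p i * (Pi.single k 1 : Fin n → ℝ) j) = 2 * ∑ j, A k j * p j := by
    intro A hA k
    simp only [Finset.sum_add_distrib]
    rw [Finset.sum_comm]
    simp [Pi.single_apply]
    rw [two_mul]
    congr 1
    exact Finset.sum_congr rfl fun i _ => by rw [hA.apply]
  simp only [map_zero, v _ (hGs x hx), v _ (hKs x hx), Pi.zero_apply, mul_zero, zero_mul,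
    add_zero, zero_add] at h1
  rw [← neg_eq_zero, ← h1, ← Finset.sum_neg_distrib]
  -- rearrangement
  have e1 : ∀ k i j, DD G k (fun y => K y i j) x
      = ∑ l, G x k l * fderiv ℝ (fun y => K y i j) x (Pi.single l 1) := fun k i j =>
    fderiv_expand _ _
  simp only [e1]
  have s1 : ∑ k, ∑ i, ∑ j, (∑ l, G x k l * fderiv ℝ (fun y => K y i j) x (Pi.single l 1))
        * p k * p i * p j
      = ∑ l, (∑ k, G x l k * p k) * ∑ i, ∑ j, fderiv ℝ (fun y => K y i j) x (Pi.single l 1)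
        * p i * p j := by
    calc _ = ∑ k, ∑ l, ∑ i, ∑ j, G x l k * p k *
          (fderiv ℝ (fun y => K y i j) x (Pi.single l 1) * p i * p j) := by
          refine Finset.sum_congr rfl fun k _ => ?_
          rw [Finset.sum_comm]
          calc _ = ∑ j, ∑ i, ∑ l, G x l k * p k *
              (fderiv ℝ (fun y => K y i j) x (Pi.single l 1) * p i * p j) := by
                refine Finset.sum_congr rfl fun j _ => Finset.sum_congr rfl fun i _ => ?_
                simp only [Finset.sum_mul]
                refine Finset.sum_congr rfl fun l _ => ?_
                rw [(hGs x hx).apply k l]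
                ring
            _ = ∑ i, ∑ j, ∑ l, G x l k * p k *
              (fderiv ℝ (fun y => K y i j) x (Pi.single l 1) * p i * p j) := Finset.sum_comm
            _ = ∑ i, ∑ l, ∑ j, G x l k * p k *
              (fderiv ℝ (fun y => K y i j) x (Pi.single l 1) * p i * p j) :=
                Finset.sum_congr rfl fun i _ => Finset.sum_comm
            _ = _ := Finset.sum_comm
      _ = ∑ l, ∑ k, ∑ i, ∑ j, G x l k * p k *
          (fderiv ℝ (fun y => K y i j) x (Pi.single l 1) * p i * p j) := Finset.sum_comm
      _ = _ := by
          refine Finset.sum_congr rfl fun l _ => ?_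
          rw [Finset.sum_mul]
          exact Finset.sum_congr rfl fun k _ => by simp only [Finset.mul_sum]
  have s2 : ∑ k, ∑ i, ∑ j, (∑ l, K x k l * fderiv ℝ (fun y => G y i j) x (Pi.single l 1))
        * p k * p i * p j
      = ∑ l, (∑ i, ∑ j, fderiv ℝ (fun y => G y i j) x (Pi.single l 1)
        * p i * p j) * ∑ k, K x l k * p k := by
    calc _ = ∑ k, ∑ l, ∑ i, ∑ j, K x l k * p k *
          (fderiv ℝ (fun y => G y i j) x (Pi.single l 1) * p i * p j) := by
          refine Finset.sum_congr rfl fun k _ => ?_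
          calc _ = ∑ i, ∑ j, ∑ l, K x l k * p k *
              (fderiv ℝ (fun y => G y i j) x (Pi.single l 1) * p i * p j) := by
                refine Finset.sum_congr rfl fun i _ => Finset.sum_congr rfl fun j _ => ?_
                simp only [Finset.sum_mul]
                refine Finset.sum_congr rfl fun l _ => ?_
                rw [(hKs x hx).apply k l]
                ring
            _ = ∑ i, ∑ l, ∑ j, K x l k * p k *
              (fderiv ℝ (fun y => G y i j) x (Pi.single l 1) * p i * p j) :=
                Finset.sum_congr rfl fun i _ => Finset.sum_comm
            _ = _ := Finset.sum_comm
      _ = ∑ l, ∑ k, ∑ i, ∑ j, K x l k * p k *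
          (fderiv ℝ (fun y => G y i j) x (Pi.single l 1) * p i * p j) := Finset.sum_comm
      _ = _ := by
          refine Finset.sum_congr rfl fun l _ => ?_
          rw [mul_comm]
          rw [Finset.sum_mul]
          exact Finset.sum_congr rfl fun k _ => by simp only [Finset.mul_sum]
  have s3 : ∑ k, ∑ i, ∑ j, (∑ l, G x k l * fderiv ℝ (fun y => K y i j) x (Pi.single l 1)
      - ∑ l, K x k l * fderiv ℝ (fun y => G y i j) x (Pi.single l 1)) * p k * p i * p j
    = (∑ k, ∑ i, ∑ j, (∑ l, G x k l * fderiv ℝ (fun y => K y i j) x (Pi.single l 1))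
        * p k * p i * p j) - ∑ k, ∑ i, ∑ j,
        (∑ l, K x k l * fderiv ℝ (fun y => G y i j) x (Pi.single l 1)) * p k * p i * p j := by
    simp only [← Finset.sum_sub_distrib]
    refine Finset.sum_congr rfl fun k _ => Finset.sum_congr rfl fun i _ =>
      Finset.sum_congr rfl fun j _ => ?_
    simp only [Finset.sum_sub_distrib]
    ring
  have s4 := s3.trans (congrArg₂ (· - ·) s1 s2)
  rw [Finset.sum_neg_distrib, neg_eq_iff_eq_neg, s4, ← Finset.sum_sub_distrib,
    ← Finset.sum_neg_distrib]
  refine Finset.sum_congr rfl fun l _ => ?_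
  ring

theorem sum4_a {n : ℕ} {ι : Type*} [Fintype ι] (c : ι → ℝ) (F : ι → Fin n → Fin n → Fin n → ℝ) :
    ∑ k, ∑ i, ∑ j, ∑ a, c a * F a k i j = ∑ a, c a * ∑ k, ∑ i, ∑ j, F a k i j := by
  calc _ = ∑ k, ∑ i, ∑ a, ∑ j, c a * F a k i j :=
        Finset.sum_congr rfl fun k _ => Finset.sum_congr rfl fun i _ => Finset.sum_comm
    _ = ∑ k, ∑ a, ∑ i, ∑ j, c a * F a k i j :=
        Finset.sum_congr rfl fun k _ => Finset.sum_comm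
    _ = ∑ a, ∑ k, ∑ i, ∑ j, c a * F a k i j := Finset.sum_comm
    _ = _ := by simp only [Finset.mul_sum]

theorem sum4_b {n : ℕ} {ι : Type*} [Fintype ι] (u : ι → Fin n → ℝ) (w : ι → Fin n → Fin n → ℝ) :
    ∑ k, ∑ i, ∑ j, ∑ a, u a k * w a i j = ∑ a, (∑ k, u a k) * (∑ i, ∑ j, w a i j) := by
  calc _ = ∑ k, ∑ i, ∑ a, ∑ j, u a k * w a i j :=
        Finset.sum_congr rfl fun k _ => Finset.sum_congr rfl fun i _ => Finset.sum_comm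
    _ = ∑ k, ∑ a, ∑ i, ∑ j, u a k * w a i j :=
        Finset.sum_congr rfl fun k _ => Finset.sum_comm
    _ = ∑ a, ∑ k, ∑ i, ∑ j, u a k * w a i j := Finset.sum_comm
    _ = _ := by
        refine Finset.sum_congr rfl fun a _ => ?_
        rw [Finset.sum_mul]
        exact Finset.sum_congr rfl fun k _ => by simp only [Finset.mul_sum]

/-- Leibniz rule for combinations of Killing tensors with function coefficients -/
theorem kil_comb {n : ℕ} {V : Set (Fin n → ℝ)} (hV : IsOpen V)
    {G : (Fin n → ℝ) → Matrix (Fin n) (Fin n) ℝ} {ι : Type*} [Fintype ι]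
    {K : ι → Fin n × Fin n → (Fin n → ℝ) → ℝ} {M : Fin n × Fin n → (Fin n → ℝ) → ℝ}
    {c : ι → (Fin n → ℝ) → ℝ} (hK : ∀ a t, Sm V (K a t)) (hM : ∀ t, Sm V (M t))
    (hc : ∀ a, Sm V (c a)) (hKk : ∀ a, Kil V G (K a)) (hMk : Kil V G M)
    {x} (hx : x ∈ V) (p : Fin n → ℝ) :
    ∑ k, ∑ i, ∑ j, (DD G k (fun y => M (i, j) y - ∑ a, c a y * K a (i, j) y) x
      - ∑ l, (M (k, l) x - ∑ a, c a x * K a (k, l) x)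
        * fderiv ℝ (fun y => G y i j) x (Pi.single l 1)) * p k * p i * p j
    = - ∑ a, (∑ k, DD G k (c a) x * p k) * (∑ i, ∑ j, K a (i, j) x * p i * p j) := by
  have e1 : ∀ k i j, DD G k (fun y => M (i, j) y - ∑ a, c a y * K a (i, j) y) x
      = DD G k (M (i, j)) x - ∑ a, (c a x * DD G k (K a (i, j)) x
        + DD G k (c a) x * K a (i, j) x) := by
    intro k i j
    rw [← DD_sum_mul hV hc (fun a => hK a (i, j)) k hx]
    exact DD_sub hV (hM (i, j)) (Sm.sum fun a => (hc a).mul (hK a (i, j))) k hx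
  have e2 : ∀ k i j, (DD G k (fun y => M (i, j) y - ∑ a, c a y * K a (i, j) y) x
      - ∑ l, (M (k, l) x - ∑ a, c a x * K a (k, l) x)
        * fderiv ℝ (fun y => G y i j) x (Pi.single l 1)) * p k * p i * p j
      = (DD G k (M (i, j)) x - ∑ l, M (k, l) x
        * fderiv ℝ (fun y => G y i j) x (Pi.single l 1)) * p k * p i * p j
      - ∑ a, c a x * ((DD G k (K a (i, j)) x - ∑ l, K a (k, l) x
        * fderiv ℝ (fun y => G y i j) x (Pi.single l 1)) * p k * p i * p j)
      - ∑ a, (DD G k (c a) x * p k) * (K a (i, j) x * p i * p j) := by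
    intro k i j
    have e3 : ∑ l, (M (k, l) x - ∑ a, c a x * K a (k, l) x)
        * fderiv ℝ (fun y => G y i j) x (Pi.single l 1)
      = ∑ l, M (k, l) x * fderiv ℝ (fun y => G y i j) x (Pi.single l 1)
        - ∑ a, c a x * ∑ l, K a (k, l) x * fderiv ℝ (fun y => G y i j) x (Pi.single l 1) := by
      simp only [sub_mul, Finset.sum_sub_distrib, Finset.sum_mul, Finset.mul_sum, mul_assoc]
      rw [Finset.sum_comm]
    have e4 : ∑ a, (DD G k (c a) x * p k) * (K a (i, j) x * p i * p j)
        = (∑ a, DD G k (c a) x * K a (i, j) x) * p k * p i * p j := by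
      simp only [Finset.sum_mul]
      exact Finset.sum_congr rfl fun a _ => by ring
    have e5 : ∑ a, c a x * ((DD G k (K a (i, j)) x - ∑ l, K a (k, l) x
        * fderiv ℝ (fun y => G y i j) x (Pi.single l 1)) * p k * p i * p j)
        = (∑ a, c a x * DD G k (K a (i, j)) x - ∑ a, c a x * ∑ l, K a (k, l) x
        * fderiv ℝ (fun y => G y i j) x (Pi.single l 1)) * p k * p i * p j := by
      rw [← Finset.sum_sub_distrib]
      simp only [Finset.sum_mul]
      exact Finset.sum_congr rfl fun a _ => by ring
    rw [e1, e3, e4, e5, Finset.sum_add_distrib]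
    ring
  simp only [e2, Finset.sum_sub_distrib]
  rw [hMk x hx p]
  have e6 : ∑ k, ∑ i, ∑ j, ∑ a, c a x * ((DD G k (K a (i, j)) x - ∑ l, K a (k, l) x
        * fderiv ℝ (fun y => G y i j) x (Pi.single l 1)) * p k * p i * p j) = 0 := by
    rw [sum4_a]
    exact Finset.sum_eq_zero fun a _ => by rw [hKk a x hx p, mul_zero]
  have e7 : ∑ k, ∑ i, ∑ j, ∑ a, (DD G k (c a) x * p k) * (K a (i, j) x * p i * p j)
      = ∑ a, (∑ k, DD G k (c a) x * p k) * (∑ i, ∑ j, K a (i, j) x * p i * p j) :=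
    sum4_b _ _
  rw [e6, e7]
  ring

/-- a Killing tensor with vanishing 2-jet vanishes identically -/
theorem kil_vanish {n : ℕ} {U : Set (Fin n → ℝ)} (hU : IsOpen U) (hUc : IsPreconnected U)
    {G : (Fin n → ℝ) → Matrix (Fin n) (Fin n) ℝ}
    (hG : ∀ i j, Sm U (fun x => G x i j)) (h0 : ∀ x ∈ U, (G x).det ≠ 0)
    (hGs : ∀ x ∈ U, (G x).IsSymm)
    {L : Fin n × Fin n → (Fin n → ℝ) → ℝ} (hL : ∀ t, Sm U (L t))
    (hsym : ∀ i j, ∀ x ∈ U, L (i, j) x = L (j, i) x) (hk : Kil U G L)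
    {x} (hx : x ∈ U) (hx0 : ∀ t, Pr G (Pr G L) t x = 0) :
    ∀ y ∈ U, ∀ t, L t y = 0 := by
  have hW : ∀ k i j, (fun x => ∑ l, L (k, l) x * fderiv ℝ (fun y => G y i j) x (Pi.single l 1))
      ∈ Sp U L := fun k i j =>
    Sp.congr (Sp.sum (s := Finset.univ) fun l =>
      Sp.mul (sm_pd hU (hG i j) (Pi.single l 1)) (Sp.gen L (k, l)))
      fun x _ => Finset.sum_congr rfl fun l _ => mul_comm _ _
  have hkil : ∀ k i j, DD G k (L (i, j)) + DD G i (L (j, k)) + DD G j (L (k, i)) ∈ Sp U L := by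
    intro k i j
    refine Sp.congr (Submodule.add_mem _ (Submodule.add_mem _ (hW k i j) (hW i j k)) (hW j k i))
      fun x hx => ?_
    have hp := cubic_polar (fun k i j => DD G k (L (i, j)) x
      - ∑ l, L (k, l) x * fderiv ℝ (fun y => G y i j) x (Pi.single l 1)) (hk x hx) k i j
    have s1 : ∀ k i j, DD G k (L (i, j)) x = DD G k (L (j, i)) x := fun k i j =>
      DD_congr hU (hsym i j) k hx
    have s2 : ∀ i j, fderiv ℝ (fun y => G y i j) x = fderiv ℝ (fun y => G y j i) x := fun i j =>
      Filter.EventuallyEq.fderiv_eq (Filter.eventually_of_mem (hU.mem_nhds hx)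
        fun y hy => (hGs y hy).apply j i)
    beta_reduce at hp
    rw [s1 k j i, s2 j i, s1 i k j, s2 k j, s1 j i k, s2 i k] at hp
    simp only [Pi.add_apply]
    linarith
  have := uniq_global hU hUc hG h0 (sm_Pr hU hG (sm_Pr hU hG hL))
    (closed_sys hU hG h0 hL hsym hkil) hx hx0
  exact fun y hy t => this y hy (Sum.inl (Sum.inl t))

/-- Gram determinant -/
theorem gram_det {n : ℕ} {ι : Type*} [Fintype ι] [DecidableEq ι]
    (A : ι → Matrix (Fin n) (Fin n) ℝ) (hA : LinearIndependent ℝ A) :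
    (Matrix.of fun a b => ∑ i, ∑ j, A a i j * A b i j : Matrix ι ι ℝ).det ≠ 0 := by
  intro h
  obtain ⟨v, hv, h1⟩ := Matrix.exists_mulVec_eq_zero_iff.2 h
  have h2 : ∑ i, ∑ j, (∑ a, v a * A a i j) ^ 2 = 0 := by
    have h3 : ∀ a, ∑ i, ∑ j, A a i j * ∑ b, v b * A b i j = 0 := by
      intro a
      have h4 := congrFun h1 a
      simp only [Matrix.mulVec, dotProduct, Matrix.of_apply, Pi.zero_apply] at h4
      rw [← h4]
      simp only [Finset.mul_sum, Finset.sum_mul]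
      calc _ = ∑ i, ∑ b, ∑ j, A a i j * (v b * A b i j) :=
            Finset.sum_congr rfl fun i _ => Finset.sum_comm
        _ = ∑ b, ∑ i, ∑ j, A a i j * (v b * A b i j) := Finset.sum_comm
        _ = _ := Finset.sum_congr rfl fun b _ => Finset.sum_congr rfl fun i _ =>
            Finset.sum_congr rfl fun j _ => by ring
    calc _ = ∑ i, ∑ j, ∑ a, v a * (A a i j * ∑ b, v b * A b i j) := by
          refine Finset.sum_congr rfl fun i _ => Finset.sum_congr rfl fun j _ => ?_
          rw [sq, Finset.sum_mul]
          exact Finset.sum_congr rfl fun a _ => by ring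
      _ = ∑ i, ∑ a, ∑ j, v a * (A a i j * ∑ b, v b * A b i j) :=
            Finset.sum_congr rfl fun i _ => Finset.sum_comm
      _ = ∑ a, ∑ i, ∑ j, v a * (A a i j * ∑ b, v b * A b i j) := Finset.sum_comm
      _ = ∑ a, v a * ∑ i, ∑ j, A a i j * ∑ b, v b * A b i j := by simp only [Finset.mul_sum]
      _ = 0 := Finset.sum_eq_zero fun a _ => by rw [h3, mul_zero]
  have h5 : ∀ i j, ∑ a, v a * A a i j = 0 := by
    intro i j
    have h6 := (Finset.sum_eq_zero_iff_of_nonneg fun i _ =>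
      Finset.sum_nonneg fun j _ => sq_nonneg _).1 h2 i (Finset.mem_univ _)
    have h7 := (Finset.sum_eq_zero_iff_of_nonneg fun j _ => sq_nonneg _).1 h6 j (Finset.mem_univ _)
    exact pow_eq_zero_iff (two_ne_zero) |>.1 h7
  apply hv
  funext a
  refine Fintype.linearIndependent_iff.1 hA v ?_ a
  ext i j
  simp [Matrix.sum_apply, h5]

/-- the main geometric step -/
theorem main_step {n : ℕ} {U : Set (Fin n → ℝ)} (hU : IsOpen U) (hUc : IsPreconnected U)
    {G : (Fin n → ℝ) → Matrix (Fin n) (Fin n) ℝ}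
    (hG : ∀ i j, Sm U (fun x => G x i j)) (h0 : ∀ x ∈ U, (G x).det ≠ 0)
    (hGs : ∀ x ∈ U, (G x).IsSymm) {ι : Type} [Fintype ι] [DecidableEq ι]
    (K : ι → (Fin n → ℝ) → Matrix (Fin n) (Fin n) ℝ) (M : (Fin n → ℝ) → Matrix (Fin n) (Fin n) ℝ)
    (hK : ∀ a i j, Sm U (fun x => K a x i j)) (hM : ∀ i j, Sm U (fun x => M x i j))
    (hKs : ∀ a, ∀ x ∈ U, (K a x).IsSymm) (hMs : ∀ x ∈ U, (M x).IsSymm)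
    (hKk : ∀ a, Kil U G (fun t x => K a x t.1 t.2)) (hMk : Kil U G (fun t x => M x t.1 t.2))
    (h2 : ∀ᵐ x ∂(volume : Measure (Fin n → ℝ)), x ∈ U →
      ∃ B : Matrix (Fin n) (Fin n) ℝ, IsUnit B ∧ ∀ a, (B * K a x * Bᵀ).IsDiag)
    (hno : ¬ ∃ c : ι → ℝ, ∀ y ∈ U, M y = ∑ a, c a • K a y) :
    ∀ᵐ x ∂(volume : Measure (Fin n → ℝ)), x ∈ U → LinearIndependent ℝ (fun a => K a x) →
      M x ∉ Submodule.span ℝ (Set.range fun a => K a x) := by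
  let gram : (Fin n → ℝ) → Matrix ι ι ℝ := fun x =>
    Matrix.of fun a b => ∑ i, ∑ j, K a x i j * K b x i j
  have hgr : ∀ a b, Sm U (fun x => gram x a b) := fun a b => by
    change Sm U (fun x => ∑ i, ∑ j, K a x i j * K b x i j)
    exact Sm.sum fun i => Sm.sum fun j => (hK a i j).mul (hK b i j)
  let V : Set (Fin n → ℝ) := U ∩ (fun x => (gram x).det) ⁻¹' {0}ᶜ
  have hV : IsOpen V :=
    (sm_det hgr).continuousOn.isOpen_inter_preimage hU isOpen_compl_singleton
  have hVU : V ⊆ U := fun x hx => hx.1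
  let lam : ι → (Fin n → ℝ) → ℝ := fun a x =>
    ∑ b, (gram x)⁻¹ a b * ∑ i, ∑ j, K b x i j * M x i j
  have hlam : ∀ a, Sm V (lam a) := fun a =>
    Sm.sum fun b => (sm_inv (fun a b => (hgr a b).mono hVU) (fun x hx => hx.2) a b).mul
      (Sm.sum fun i => Sm.sum fun j => ((hK b i j).mul (hM i j)).mono hVU)
  let S : Set (Fin n → ℝ) := {x | x ∈ U ∧ LinearIndependent ℝ (fun a => K a x) ∧
      M x ∈ Submodule.span ℝ (Set.range fun a => K a x)}
  have hSV : S ⊆ V := fun x hx => ⟨hx.1, gram_det _ hx.2.1⟩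
  let T : Fin n × Fin n → (Fin n → ℝ) → ℝ := fun t x =>
    M x t.1 t.2 - ∑ a, lam a x * K a x t.1 t.2
  have hT : ∀ t, Sm V (T t) := fun t =>
    ((hM _ _).mono hVU).sub (Sm.sum fun a => (hlam a).mul ((hK a _ _).mono hVU))
  have hTS : ∀ t, ∀ x ∈ S, T t x = 0 := by
    rintro ⟨i, j⟩ x hx
    obtain ⟨c, hc⟩ := (Submodule.mem_span_range_iff_exists_fun ℝ).1 hx.2.2
    have hMx : ∀ i j, M x i j = ∑ a, c a * K a x i j := by
      intro i j
      rw [← hc]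
      simp [Matrix.sum_apply]
    have h3 : (fun b => ∑ i, ∑ j, K b x i j * M x i j) = gram x *ᵥ c := by
      funext b
      simp only [Matrix.mulVec, dotProduct, gram, Matrix.of_apply, hMx, Finset.mul_sum,
        Finset.sum_mul]
      calc _ = ∑ i, ∑ a, ∑ j, K b x i j * (c a * K a x i j) :=
            Finset.sum_congr rfl fun i _ => Finset.sum_comm
        _ = ∑ a, ∑ i, ∑ j, K b x i j * (c a * K a x i j) := Finset.sum_comm
        _ = _ := Finset.sum_congr rfl fun b _ => Finset.sum_congr rfl fun i _ =>
            Finset.sum_congr rfl fun j _ => by ring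
    have h4 : ∀ a, lam a x = c a := by
      intro a
      have h5 : lam a x = ((gram x)⁻¹ *ᵥ (gram x *ᵥ c)) a := by
        rw [← h3]; rfl
      rw [h5, Matrix.mulVec_mulVec,
        Matrix.nonsing_inv_mul _ (isUnit_iff_ne_zero.2 (hSV hx).2), Matrix.one_mulVec]
    simp only [T, h4, hMx, sub_self]
  have hT0 : ∀ t, ∀ᵐ x ∂(volume : Measure (Fin n → ℝ)), x ∈ S → T t x = 0 := fun t =>
    Filter.Eventually.of_forall (hTS t)
  have hGV : ∀ i j, Sm V (fun x => G x i j) := fun i j => (hG i j).mono hVU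
  have hT1 := ae_Pr hV G hT hSV hT0
  have hT2 := ae_Pr hV G (sm_Pr hV hGV hT) hSV hT1
  have hl1 : ∀ᵐ x ∂(volume : Measure (Fin n → ℝ)), x ∈ S → ∀ a k, DD G k (lam a) x = 0 := by
    filter_upwards [h2, ae_all_iff.2 hT1] with x h3 h4 hx
    obtain ⟨B, hB, hd⟩ := h3 hx.1
    refine diag_indep (fun a => K a x) hx.2.1 B hB hd (fun a k => DD G k (lam a) x) ?_
    intro p
    have h5 := kil_comb hV (G := G) (K := fun a t x => K a x t.1 t.2)
      (M := fun t x => M x t.1 t.2) (c := lam) (fun a t => (hK a _ _).mono hVU)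
      (fun t => (hM _ _).mono hVU) hlam (fun a x hx => hKk a x (hVU hx))
      (fun x hx => hMk x (hVU hx)) (hSV hx) p
    have h6 : ∀ k i j, DD G k (fun y => M y i j - ∑ a, lam a y * K a y i j) x = 0 :=
      fun k i j => h4 (Sum.inr (k, (i, j))) hx
    have h7 : ∀ k l, M x k l - ∑ a, lam a x * K a x k l = 0 := fun k l => hTS (k, l) x hx
    simp only [h6, h7, zero_mul, Finset.sum_const_zero, sub_zero] at h5
    rw [eq_comm, neg_eq_zero] at h5
    rw [← h5]
    refine Finset.sum_congr rfl fun a _ => ?_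
    congr 1
    simp only [Matrix.mulVec, dotProduct, Finset.mul_sum]
    exact Finset.sum_congr rfl fun i _ => Finset.sum_congr rfl fun j _ => by ring
  have hl2 : ∀ k l a, ∀ᵐ x ∂(volume : Measure (Fin n → ℝ)), x ∈ S →
      DD G l (DD G k (lam a)) x = 0 := fun k l a =>
    ae_DD hV G (sm_DD hV hGV (hlam a) k) hSV (hl1.mono fun x h hx => h hx a k) l
  by_contra hcon
  have hcon2 : ¬ ∀ᵐ x ∂(volume : Measure (Fin n → ℝ)), x ∉ S := fun h =>
    hcon (h.mono fun x hx hxU hli hsp => hx ⟨hxU, hli, hsp⟩)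
  obtain ⟨x, hx, h3, h4, h5⟩ : ∃ x, x ∈ S ∧ (∀ t, Pr G (Pr G T) t x = 0) ∧
      (∀ a k, DD G k (lam a) x = 0) ∧ ∀ k l a, DD G l (DD G k (lam a)) x = 0 := by
    by_contra hne
    apply hcon2
    filter_upwards [ae_all_iff.2 hT2, hl1, ae_all_iff.2 fun k => ae_all_iff.2 fun l =>
      ae_all_iff.2 fun a => hl2 k l a] with x h3 h4 h5 hx
    exact hne ⟨x, hx, fun t => h3 t hx, h4 hx, fun k l a => h5 k l a hx⟩
  let J : (Fin n × Fin n) ⊕ ι → (Fin n → ℝ) → ℝ :=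
    Sum.elim T (fun a y => lam a y - lam a x)
  have hJ : ∀ t, Sm V (J t) := by
    rintro (t | a)
    · exact hT t
    · exact (hlam a).sub contDiffOn_const
  have hDc : ∀ k a, DD G k (fun y => lam a y - lam a x) = DD G k (lam a) := by
    intro k a
    funext y
    unfold DD
    rw [fderiv_sub_const]
  have hJ0 : ∀ t, Pr G (Pr G J) t x = 0 := by
    rintro ((( t | a) | ⟨k, (t | a)⟩) | ⟨l, ((t | a) | ⟨k, (t | a)⟩)⟩)
    · exact h3 (Sum.inl (Sum.inl t))
    · exact sub_self _
    · exact h3 (Sum.inl (Sum.inr (k, t)))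
    · exact (congrFun (hDc k a) x).trans (h4 a k)
    · exact h3 (Sum.inr (l, Sum.inl t))
    · exact (congrFun (hDc l a) x).trans (h4 a l)
    · exact h3 (Sum.inr (l, Sum.inr (k, t)))
    · change DD G l (DD G k (fun y => lam a y - lam a x)) x = 0
      rw [hDc, h5]
  let L : Fin n × Fin n → (Fin n → ℝ) → ℝ := fun t y =>
    M y t.1 t.2 - ∑ a, lam a x * K a y t.1 t.2
  have hLJ : ∀ t, L t ∈ Sp V J := by
    intro t
    refine Sp.congr (Submodule.add_mem _ (Sp.gen J (Sum.inl t))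
      (Sp.sum (s := Finset.univ) fun a => Sp.mul ((hK a t.1 t.2).mono hVU)
        (Sp.gen J (Sum.inr a)))) fun y _ => ?_
    simp only [Pi.add_apply, J, Sum.elim_inl, Sum.elim_inr, L, T, mul_sub, Finset.sum_sub_distrib]
    simp only [mul_comm (K _ y _ _)]
    ring
  have hLx : ∀ t, Pr G (Pr G L) t x = 0 := fun t =>
    Sp.zero (Sp.prolong hV hGV (sm_Pr hV hGV hJ) (Sp.prolong hV hGV hJ hLJ) t) (hSV hx) hJ0
  have hLs : ∀ t, Sm U (L t) := fun t =>
    (hM _ _).sub (Sm.sum fun a => contDiffOn_const.mul (hK a _ _))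
  have hLk : Kil U G L := by
    intro y hy p
    have h6 := kil_comb hU (G := G) (K := fun a t x => K a x t.1 t.2)
      (M := fun t x => M x t.1 t.2) (c := fun a _ => lam a x) (fun a t => hK a _ _)
      (fun t => hM _ _) (fun a => contDiffOn_const) hKk hMk hy p
    have h7 : ∀ a k, DD G k (fun _ => lam a x) y = 0 := fun a k => by simp [DD]
    simp only [h7, zero_mul, Finset.sum_const_zero, neg_zero] at h6
    exact h6
  have hfin := kil_vanish hU hUc hG h0 hGs hLs (fun i j y hy => by
    simp only [L]
    rw [(hMs y hy).apply]
    congr 1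
    exact Finset.sum_congr rfl fun a _ => by rw [(hKs a y hy).apply]) hLk hx.1 hLx
  refine hno ⟨fun a => lam a x, fun y hy => ?_⟩
  ext i j
  have := hfin y hy (i, j)
  simp only [L] at this
  simp only [Matrix.sum_apply, Matrix.smul_apply, smul_eq_mul]
  linarith

/-- if the geodesic flow of `G = K 0` admits the quadratic integrals
`I α (x,p) = pᵀ K α (x) p`, `α = 1, …, n`, which are simultaneously diagonalisable
at almost every point and whose differentials are linearly independent at some point,
then at almost every point `x ∈ U` the matrices `K 1 (x), …, K n (x)` are linearly
independent. -/
theorem stmt0 (n : ℕ) (hn : 1 ≤ n)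
    (U : Set (Fin n → ℝ)) (hUopen : IsOpen U) (hUconn : IsConnected U)
    (K : Fin n → (Fin n → ℝ) → Matrix (Fin n) (Fin n) ℝ)
    (hKsmooth : ∀ α i j, ContDiffOn ℝ (⊤ : ℕ∞) (fun x => K α x i j) U)
    (hKsymm : ∀ α, ∀ x ∈ U, (K α x).IsSymm)
    (hGinv : ∀ x ∈ U, IsUnit (K ⟨0, hn⟩ x))
    (I : Fin n → (Fin n → ℝ) × (Fin n → ℝ) → ℝ)
    (hI : ∀ α, I α = fun z => ∑ i : Fin n, ∑ j : Fin n, K α z.1 i j * z.2 i * z.2 j)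
    (H : (Fin n → ℝ) × (Fin n → ℝ) → ℝ)
    (hH : H = fun z => (1 / 2 : ℝ) * I ⟨0, hn⟩ z)
    -- (1) each `I α` is an integral of the geodesic flow
    (h1 : ∀ α, ∀ z : (Fin n → ℝ) × (Fin n → ℝ), z.1 ∈ U → poisson H (I α) z = 0)
    -- (2) simultaneous diagonalisability at almost every point
    (h2 : ∀ᵐ x ∂(volume : Measure (Fin n → ℝ)), x ∈ U →
      ∃ B : Matrix (Fin n) (Fin n) ℝ, IsUnit B ∧ ∀ α, (B * K α x * Bᵀ).IsDiag)
    -- (3) the differentials of the integrals are linearly independent at some point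
    (h3 : ∃ z : (Fin n → ℝ) × (Fin n → ℝ), z.1 ∈ U ∧
      LinearIndependent ℝ (fun α => fderiv ℝ (I α) z)) :
    ∀ᵐ x ∂(volume : Measure (Fin n → ℝ)), x ∈ U →
      LinearIndependent ℝ (fun α => K α x) := by
  classical
  have hGs := hKsymm ⟨0, hn⟩
  have h0 : ∀ x ∈ U, (K ⟨0, hn⟩ x).det ≠ 0 := fun x hx =>
    isUnit_iff_ne_zero.1 ((Matrix.isUnit_iff_isUnit_det _).1 (hGinv x hx))
  have hkil : ∀ α, Kil U (K ⟨0, hn⟩) (fun t x => K α x t.1 t.2) := by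
    intro α
    refine kil_of_poisson hUopen (hKsmooth _) (hKsmooth α) hGs (hKsymm α) ?_
    intro z hz
    have := h1 α z hz
    rw [hH, hI, hI] at this
    exact this
  have hno : ∀ (b : Set (Fin n)) (β : Fin n), β ∉ b →
      ¬ ∃ c : b → ℝ, ∀ y ∈ U, K β y = ∑ a : b, c a • K a y := by
    rintro b β hβ ⟨c, hc⟩
    obtain ⟨z, hz, hli⟩ := h3
    have hda : ∀ α, DifferentiableAt ℝ (I α) z := by
      intro α
      obtain ⟨φ, hφ, -⟩ := hasFDerivAt_quad (K := K α)
        (fun i j => Sm.diffAt hUopen (hKsmooth α i j) hz) z.2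
      rw [hI]
      exact hφ.differentiableAt
    have hev : I β =ᶠ[nhds z] fun w => ∑ a : b, c a * I a w := by
      have hopen : IsOpen (Prod.fst ⁻¹' U : Set ((Fin n → ℝ) × (Fin n → ℝ))) :=
        hUopen.preimage continuous_fst
      refine Filter.eventually_of_mem (hopen.mem_nhds hz) fun w hw => ?_
      simp only [hI, hc w.1 hw, Matrix.sum_apply, Matrix.smul_apply, smul_eq_mul,
        Finset.mul_sum, Finset.sum_mul]
      calc _ = ∑ i, ∑ a : b, ∑ j, c a * K a w.1 i j * w.2 i * w.2 j :=
            Finset.sum_congr rfl fun i _ => Finset.sum_comm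
        _ = ∑ a : b, ∑ i, ∑ j, c a * K a w.1 i j * w.2 i * w.2 j := Finset.sum_comm
        _ = _ := Finset.sum_congr rfl fun b _ => Finset.sum_congr rfl fun i _ =>
            Finset.sum_congr rfl fun j _ => by ring
    have hfd : fderiv ℝ (I β) z = ∑ a : b, c a • fderiv ℝ (I a) z := by
      rw [hev.fderiv_eq, fderiv_fun_sum fun (a : b) _ => (hda a).const_mul (c a)]
      exact Finset.sum_congr rfl fun a _ => fderiv_const_mul (hda a) (c a)
    refine hli.notMem_span_image hβ ?_
    rw [hfd]
    exact Submodule.sum_mem _ fun a _ => Submodule.smul_mem _ _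
      (Submodule.subset_span ⟨a, a.2, rfl⟩)
  have hmain : ∀ᵐ x ∂(volume : Measure (Fin n → ℝ)), ∀ (b : Set (Fin n)) (β : Fin n), β ∉ b →
      x ∈ U → LinearIndependent ℝ (fun a : b => K a x) →
      K β x ∉ Submodule.span ℝ (Set.range fun a : b => K a x) := by
    refine ae_all_iff.2 fun b => ae_all_iff.2 fun β => ?_
    by_cases hβ : β ∈ b
    · exact Filter.Eventually.of_forall fun x h => absurd hβ h
    have := main_step hUopen hUconn.isPreconnected (hKsmooth _) h0 hGs
      (fun a : b => K a) (K β) (fun a => hKsmooth a) (hKsmooth β) (fun a => hKsymm a) (hKsymm β)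
      (fun a => hkil a) (hkil β)
      (h2.mono fun x h hx => (h hx).imp fun B hB => ⟨hB.1, fun a => hB.2 a⟩) (hno b β hβ)
    exact this.mono fun x h _ => h
  filter_upwards [hmain] with x hx hxU
  by_contra hdep
  obtain ⟨b, -, -, hsp, hlib⟩ := exists_linearIndepOn_extension
    (linearIndepOn_empty ℝ (fun α => K α x)) (Set.empty_subset Set.univ)
  by_cases hb : b = Set.univ
  · subst hb
    exact hdep (linearIndepOn_univ_iff.1 hlib)
  · obtain ⟨β, hβ⟩ := (Set.ne_univ_iff_exists_notMem b).1 hb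
    refine hx b β hβ hxU hlib ?_
    have := hsp ⟨β, Set.mem_univ _, rfl⟩
    rw [Set.image_eq_range] at this
    exact this
end

section
/- Under assumptions (1), (2), (3) on the quadratic integrals of the geodesic flow, for almost every x ∈ U (with respect to Lebesgue measure on ℝⁿ) the set of coefficient vectors (λ_2, …, λ_n) ∈ ℝ^{n−1} for which the n×n matrix (∑_{α=2}^n λ_α K_α(x)) · G(x)⁻¹ has n pairwise distinct real eigenvalues (equivalently, its characteristic polynomial has n distinct real roots) is open and dense in ℝ^{n−1}. -/
open MeasureTheory Matrix Polynomial

/-- smooth functions on `U` -/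
def SA {n : ℕ} (U : Set (Fin n → ℝ)) : Subalgebra ℝ ((Fin n → ℝ) → ℝ) where
  carrier := {f | ContDiffOn ℝ (⊤ : ℕ∞) f U}
  mul_mem' := fun ha hb => ContDiffOn.mul ha hb
  add_mem' := fun ha hb => ContDiffOn.add ha hb
  algebraMap_mem' := fun _ => contDiffOn_const

theorem SA_diffAt {n : ℕ} {U : Set (Fin n → ℝ)} (hU : IsOpen U) (f : SA U) {x : Fin n → ℝ}
    (hx : x ∈ U) : DifferentiableAt ℝ (f : (Fin n → ℝ) → ℝ) x := by
  have h : ContDiffOn ℝ (⊤ : ℕ∞) (f : (Fin n → ℝ) → ℝ) U := f.2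
  exact (h.contDiffAt (hU.mem_nhds hx)).differentiableAt (by simp)

/-- partial derivative -/
noncomputable def dA {n : ℕ} {U : Set (Fin n → ℝ)} (hU : IsOpen U) (k : Fin n) :
    Derivation ℝ (SA U) (SA U) :=
  Derivation.mk'
    { toFun := fun f => ⟨U.indicator (fun x => fderiv ℝ (f : (Fin n → ℝ) → ℝ) x (Pi.single k 1)), by
        have h : ContDiffOn ℝ (⊤ : ℕ∞) (f : (Fin n → ℝ) → ℝ) U := f.2
        have h2 : ContDiffOn ℝ (⊤ : ℕ∞) (fun x => fderiv ℝ (f : (Fin n → ℝ) → ℝ) x (Pi.single k 1)) U :=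
          (h.fderiv_of_isOpen hU (m := (⊤ : ℕ∞)) (by simp)).clm_apply contDiffOn_const
        exact h2.congr (fun x hx => by simp [hx])⟩
      map_add' := by
        intro f g
        ext x
        by_cases hx : x ∈ U
        · have := fderiv_add (SA_diffAt hU f hx) (SA_diffAt hU g hx)
          simp [hx, this]
        · simp [hx]
      map_smul' := by
        intro c f
        ext x
        by_cases hx : x ∈ U
        · have := fderiv_const_smul (SA_diffAt hU f hx) c
          simp [hx, this]
        · simp [hx] }
    (by
      intro f g
      ext x
      by_cases hx : x ∈ U
      · have := fderiv_mul (SA_diffAt hU f hx) (SA_diffAt hU g hx)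
        simp [hx, this]
      · simp [hx])

theorem dA_apply {n : ℕ} {U : Set (Fin n → ℝ)} (hU : IsOpen U) (k : Fin n) (f : SA U)
    {x : Fin n → ℝ} (hx : x ∈ U) :
    (dA hU k f : (Fin n → ℝ) → ℝ) x = fderiv ℝ (f : (Fin n → ℝ) → ℝ) x (Pi.single k 1) := by
  simp [dA, hx]

theorem dA_off {n : ℕ} {U : Set (Fin n → ℝ)} (hU : IsOpen U) (k : Fin n) (f : SA U)
    {x : Fin n → ℝ} (hx : x ∉ U) :
    (dA hU k f : (Fin n → ℝ) → ℝ) x = 0 := by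
  simp [dA, hx]

theorem dA_comm {n : ℕ} {U : Set (Fin n → ℝ)} (hU : IsOpen U) (k l : Fin n) (f : SA U) :
    dA hU k (dA hU l f) = dA hU l (dA hU k f) := by
  ext x
  by_cases hx : x ∈ U
  · have h : ContDiffOn ℝ (⊤ : ℕ∞) (f : (Fin n → ℝ) → ℝ) U := f.2
    have hs : IsSymmSndFDerivAt ℝ (f : (Fin n → ℝ) → ℝ) x :=
      (h.contDiffAt (hU.mem_nhds hx)).isSymmSndFDerivAt (by
        rw [minSmoothness_of_isRCLikeNormedField]; exact WithTop.coe_le_coe.2 (le_top : (2 : ℕ∞) ≤ ⊤))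
    have hd : DifferentiableAt ℝ (fderiv ℝ (f : (Fin n → ℝ) → ℝ)) x :=
      ((h.fderiv_of_isOpen hU (m := (⊤ : ℕ∞)) (by simp)).contDiffAt
        (hU.mem_nhds hx)).differentiableAt (by simp)
    have key : ∀ k l : Fin n, (dA hU k (dA hU l f) : (Fin n → ℝ) → ℝ) x =
        fderiv ℝ (fderiv ℝ (f : (Fin n → ℝ) → ℝ)) x (Pi.single k 1) (Pi.single l 1) := by
      intro k l
      rw [dA_apply hU k _ hx]
      have he : (dA hU l f : (Fin n → ℝ) → ℝ) =ᶠ[nhds x]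
          fun y => fderiv ℝ (f : (Fin n → ℝ) → ℝ) y (Pi.single l 1) := by
        filter_upwards [hU.mem_nhds hx] with y hy using dA_apply hU l f hy
      rw [he.fderiv_eq, fderiv_clm_apply hd (by fun_prop)]
      simp
    rw [key, key]
    exact hs _ _
  · rw [dA_off hU _ _ hx, dA_off hU _ _ hx]

/-- evaluation -/
def evA {n : ℕ} (U : Set (Fin n → ℝ)) (x : Fin n → ℝ) : SA U →ₐ[ℝ] ℝ :=
  (Pi.evalAlgHom ℝ (fun _ : Fin n → ℝ => ℝ) x).comp (SA U).val

theorem evA_apply {n : ℕ} (U : Set (Fin n → ℝ)) (x : Fin n → ℝ) (f : SA U) :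
  evA U x f = (f : (Fin n → ℝ) → ℝ) x := rfl

theorem ae_deriv_zero {n : ℕ} {U : Set (Fin n → ℝ)} (hU : IsOpen U) (f : SA U) :
    ∀ᵐ x ∂(volume : Measure (Fin n → ℝ)), x ∈ U → evA U x f = 0 →
      ∀ k, evA U x (dA hU k f) = 0 := by
  have hf : ContDiffOn ℝ (⊤ : ℕ∞) (f : (Fin n → ℝ) → ℝ) U := f.2
  set S : Set (Fin n → ℝ) := {x | x ∈ U ∧ (f : (Fin n → ℝ) → ℝ) x = 0} with hS
  have hSm : MeasurableSet S := by
    have : S = U \ (U ∩ (f : (Fin n → ℝ) → ℝ) ⁻¹' {0}ᶜ) := by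
      ext x; simp [hS]
    rw [this]
    refine hU.measurableSet.diff (hf.continuousOn.isOpen_inter_preimage hU ?_).measurableSet
    exact isOpen_compl_singleton
  rcases n with _ | n
  · filter_upwards with x hx h0 k using k.elim0
  let F : (Fin (n+1) → ℝ) → (Fin (n+1) → ℝ) := fun x _ => (f : (Fin (n+1) → ℝ) → ℝ) x
  have hA : ApproximatesLinearOn F (0 : (Fin (n+1) → ℝ) →L[ℝ] (Fin (n+1) → ℝ)) S 0 := by
    intro x hx y hy
    have : F x = F y := by
      funext i
      exact hx.2.trans hy.2.symm
    simp [this]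
  have h := hA.norm_fderiv_sub_le volume hSm (fun x => fderiv ℝ F x) (by
    intro x hx
    have : DifferentiableAt ℝ F x := differentiableAt_pi.2 fun i => SA_diffAt hU f hx.1
    exact this.hasFDerivAt.hasFDerivWithinAt)
  rw [ae_restrict_iff' hSm] at h
  filter_upwards [h] with x hx hxU h0 k
  have h1 := hx ⟨hxU, h0⟩
  simp only [sub_zero, nonpos_iff_eq_zero, nnnorm_eq_zero] at h1
  rw [evA_apply, dA_apply hU k f hxU]
  have h2 : fderiv ℝ F x (Pi.single k 1) 0 = fderiv ℝ (f : (Fin (n+1) → ℝ) → ℝ) x (Pi.single k 1) := by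
    have : fderiv ℝ F x = ContinuousLinearMap.pi fun i : Fin (n+1) => fderiv ℝ (f : (Fin (n+1) → ℝ) → ℝ) x :=
      fderiv_pi (fun i => SA_diffAt hU f hxU)
    rw [this]; rfl
  rw [← h2, h1]; simp


theorem exists_minor {ι κ : Type} [Fintype ι] [Fintype κ] (P : Matrix ι κ ℝ) :
    ∃ (r : ℕ) (s : Fin r → ι) (t : Fin r → κ), (P.submatrix s t).det ≠ 0 ∧
      (P.submatrix s t).det • P =
        P.submatrix id t * (P.submatrix s t).adjugate * P.submatrix s id := by
  obtain ⟨ι', a, ha, hspan, hli⟩ := exists_linearIndependent' ℝ (fun i => P i)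
  have : Finite ι' := Finite.of_injective a ha
  have := Fintype.ofFinite ι'
  let e := Fintype.equivFin ι'
  let s : Fin (Fintype.card ι') → ι := a ∘ e.symm
  have hs1 : LinearIndependent ℝ (fun i => P (s i)) := hli.comp _ e.symm.injective
  have hs2 : ∀ i, P i ∈ Submodule.span ℝ (Set.range (fun i => P (s i))) := by
    intro i
    have : Set.range (fun i => P (s i)) = Set.range ((fun i => P i) ∘ a) := by
      exact e.symm.surjective.range_comp (fun i => P (a i))
    rw [this, hspan]
    exact Submodule.subset_span ⟨i, rfl⟩
  clear_value s
  clear e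
  generalize Fintype.card ι' = r at s hs1 hs2
  obtain ⟨κ', b, hb, hspan', hli'⟩ := exists_linearIndependent' ℝ (fun j => (P.submatrix s id)ᵀ j)
  have : Finite κ' := Finite.of_injective b hb
  have := Fintype.ofFinite κ'
  have hrank : (P.submatrix s id).rank = r := by
    have := LinearIndependent.rank_matrix (M := P.submatrix s id) hs1
    simpa using this
  have hcard : Fintype.card κ' = r := by
    rw [← hrank, Matrix.rank_eq_finrank_span_cols, ← finrank_span_eq_card hli', hspan']
    rfl
  let e' := Fintype.equivFinOfCardEq hcard
  let t : Fin r → κ := b ∘ e'.symm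
  have ht1 : LinearIndependent ℝ (fun j => (P.submatrix s t)ᵀ j) :=
    hli'.comp _ e'.symm.injective
  have hu : IsUnit (P.submatrix s t) := Matrix.linearIndependent_cols_iff_isUnit.1 ht1
  have hdet : (P.submatrix s t).det ≠ 0 := ((Matrix.isUnit_iff_isUnit_det _).1 hu).ne_zero
  refine ⟨r, s, t, hdet, ?_⟩
  have : ∀ i, ∃ c : Fin r → ℝ, ∑ k, c k • P (s k) = P i := by
    intro i
    exact (Submodule.mem_span_range_iff_exists_fun ℝ).1 (hs2 i)
  choose c hc using this
  have hX : P = (Matrix.of c) * P.submatrix s id := by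
    ext i j
    rw [← hc i]
    simp [Matrix.mul_apply]
  have hX2 : P.submatrix id t = (Matrix.of c) * P.submatrix s t := by
    ext i j
    rw [Matrix.submatrix_apply, id, ← hc i]
    simp [Matrix.mul_apply]
  rw [hX2, Matrix.mul_assoc (Matrix.of c), Matrix.mul_adjugate]
  rw [Matrix.mul_smul, Matrix.mul_one, Matrix.smul_mul, ← hX]

theorem lemL {n : ℕ} {U : Set (Fin n → ℝ)} (hU : IsOpen U) {ι κ : Type} [Fintype ι] [Fintype κ]
    (P : Matrix ι κ (SA U)) :
    ∀ᵐ x ∂(volume : Measure (Fin n → ℝ)), x ∈ U → ∀ c : κ → ℝ,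
      (∀ i, ∑ j, evA U x (P i j) * c j = 0) → ∀ k, ∃ c' : κ → ℝ,
        ∀ i, ∑ j, evA U x (dA hU k (P i j)) * c j = ∑ j, evA U x (P i j) * c' j := by
  let F : (Σ r : ℕ, (Fin r → ι) × (Fin r → κ)) → ι → κ → SA U := fun q i j =>
    (P.submatrix q.2.1 q.2.2).det * P i j -
      ∑ a, (P.submatrix id q.2.2 * (P.submatrix q.2.1 q.2.2).adjugate) i a * P (q.2.1 a) j
  have h : ∀ᵐ x ∂(volume : Measure (Fin n → ℝ)), ∀ q i j, x ∈ U → evA U x (F q i j) = 0 →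
      ∀ k, evA U x (dA hU k (F q i j)) = 0 := by
    have : Countable ι := Finite.to_countable
    have : Countable κ := Finite.to_countable
    rw [ae_all_iff]; intro q
    rw [ae_all_iff]; intro i
    rw [ae_all_iff]; intro j
    exact ae_deriv_zero hU (F q i j)
  filter_upwards [h] with x hx hxU c hc k
  obtain ⟨r, s, t, hdet, hF⟩ := exists_minor (P.map (evA U x))
  have hsub : ((P.map (evA U x)).submatrix s t) = (P.submatrix s t).map (evA U x) := rfl
  have hdet' : ((P.map (evA U x)).submatrix s t).det = evA U x (P.submatrix s t).det := by
    rw [hsub]; exact ((evA U x).map_det _).symm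
  have hadj : ((P.map (evA U x)).submatrix s t).adjugate =
      ((P.submatrix s t).adjugate).map (evA U x) := by
    rw [hsub]; exact ((evA U x).map_adjugate _).symm
  have hF0 : ∀ i j, evA U x (F ⟨r, s, t⟩ i j) = 0 := by
    intro i j
    have := congrFun (congrFun hF i) j
    rw [hdet', hadj, Matrix.mul_apply] at this
    simp only [F, map_sub, map_mul, map_sum, Matrix.mul_apply]
    rw [sub_eq_zero]
    simpa [Matrix.mul_apply] using this
  rw [hdet'] at hdet
  set δ := evA U x (P.submatrix s t).det with hδ
  set Z := P.submatrix id t * (P.submatrix s t).adjugate with hZ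
  have hd : ∀ i j, δ * evA U x (dA hU k (P i j)) =
      - (evA U x (dA hU k (P.submatrix s t).det) * evA U x (P i j)) +
      ∑ a, (evA U x (Z i a) * evA U x (dA hU k (P (s a) j)) +
        evA U x (P (s a) j) * evA U x (dA hU k (Z i a))) := by
    intro i j
    have := hx ⟨r, s, t⟩ i j hxU (hF0 i j) k
    simp only [F, map_sub, map_sum, Derivation.leibniz, smul_eq_mul, map_add, map_mul] at this
    linear_combination this
  -- the vector
  let w : Fin r → ℝ := fun a => ∑ j, evA U x (dA hU k (P (s a) j)) * c j
  have h1 : ∀ i, δ * ∑ j, evA U x (dA hU k (P i j)) * c j = ∑ a, evA U x (Z i a) * w a := by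
    intro i
    calc _ = ∑ j, (δ * evA U x (dA hU k (P i j))) * c j := by
            rw [Finset.mul_sum]; exact Finset.sum_congr rfl fun j _ => by ring
      _ = ∑ j, (- evA U x (dA hU k (P.submatrix s t).det) * (evA U x (P i j) * c j) +
            (∑ a, (evA U x (Z i a) * (evA U x (dA hU k (P (s a) j)) * c j)) +
              ∑ a, evA U x (dA hU k (Z i a)) * (evA U x (P (s a) j) * c j))) := by
            refine Finset.sum_congr rfl fun j _ => ?_
            rw [hd, add_mul, Finset.sum_mul, ← Finset.sum_add_distrib]
            congr 1
            · ring
            · exact Finset.sum_congr rfl fun a _ => by ring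
      _ = _ := by
            rw [Finset.sum_add_distrib, Finset.sum_add_distrib, ← Finset.mul_sum, hc,
              Finset.sum_comm, Finset.sum_comm (f := fun j a => evA U x (dA hU k (Z i a)) * _)]
            simp only [← Finset.mul_sum, hc, w]
            simp
  have h2 : ∀ i a, evA U x (Z i a) =
      ∑ b, evA U x (P i (t b)) * evA U x ((P.submatrix s t).adjugate b a) := by
    intro i a
    rw [hZ, Matrix.mul_apply, map_sum]
    simp
  classical
  refine ⟨fun j => ∑ b, if t b = j then δ⁻¹ * ∑ a, evA U x ((P.submatrix s t).adjugate b a) * w a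
    else 0, fun i => ?_⟩
  have h3 : ∑ j, evA U x (dA hU k (P i j)) * c j = δ⁻¹ * ∑ a, evA U x (Z i a) * w a := by
    rw [← h1]; field_simp
  rw [h3]
  simp only [Finset.mul_sum, h2, Finset.sum_mul, mul_ite, mul_zero]
  rw [Finset.sum_comm (γ := κ)]
  simp only [Finset.sum_ite_eq, Finset.mem_univ, if_true]
  rw [Finset.sum_comm]
  refine Finset.sum_congr rfl fun b _ => ?_
  exact Finset.sum_congr rfl fun b _ => by ring


/-- rigidity -/
theorem rigid {n : ℕ} {U : Set (Fin n → ℝ)} (hU : IsOpen U) (hc : IsPreconnected U)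
    {ι : Type} [Fintype ι] (v : ι → SA U)
    (hv : ∀ k i, dA hU k (v i) ∈ Submodule.span (SA U) (Set.range v))
    {x₁ : Fin n → ℝ} (hx₁ : x₁ ∈ U) (h0 : ∀ i, evA U x₁ (v i) = 0) :
    ∀ x ∈ U, ∀ i, evA U x (v i) = 0 := by
  have : ∀ k i, ∃ c : ι → SA U, ∑ j, c j • v j = dA hU k (v i) := fun k i =>
    (Submodule.mem_span_range_iff_exists_fun (SA U)).1 (hv k i)
  choose C hC using this
  let V : (Fin n → ℝ) → (ι → ℝ) := fun x i => evA U x (v i)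
  have hVc : ContinuousOn V U := by
    rw [continuousOn_pi]
    intro i x hx
    exact (SA_diffAt hU (v i) hx).continuousAt.continuousWithinAt
  have hclosed : IsOpen (U ∩ V ⁻¹' {0}ᶜ) := hVc.isOpen_inter_preimage hU isOpen_compl_singleton
  have hopen : IsOpen (U ∩ V ⁻¹' {0}) := by
    rw [Metric.isOpen_iff]
    rintro y ⟨hyU, hy⟩
    obtain ⟨ε, hε, hball⟩ := Metric.isOpen_iff.1 hU y hyU
    refine ⟨ε / 2, by positivity, ?_⟩
    have hcb : Metric.closedBall y (ε / 2) ⊆ U :=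
      (Metric.closedBall_subset_ball (by linarith)).trans hball
    -- bound on coefficients
    let Q : (Fin n → ℝ) → (Fin n → ι → ι → ℝ) := fun x k i j => evA U x (C k i j)
    have hQ : ContinuousOn Q (Metric.closedBall y (ε / 2)) := by
      simp only [continuousOn_pi, Q]
      intro k i j x hx
      exact (SA_diffAt hU (C k i j) (hcb hx)).continuousAt.continuousWithinAt
    obtain ⟨M, hM⟩ := (isCompact_closedBall y (ε / 2)).exists_bound_of_continuousOn hQ
    intro z hz
    refine ⟨hball (Metric.ball_subset_ball (by linarith) hz), ?_⟩
    let γ : ℝ → (Fin n → ℝ) := fun t => y + t • (z - y)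
    have hγ : ∀ t ∈ Set.Icc (0:ℝ) 1, γ t ∈ Metric.closedBall y (ε / 2) := by
      intro t ht
      rw [mem_closedBall_iff_norm]
      have : γ t - y = t • (z - y) := by simp [γ]
      rw [this, norm_smul, Real.norm_of_nonneg ht.1]
      have h1 : ‖z - y‖ < ε / 2 := mem_ball_iff_norm.1 hz
      nlinarith [norm_nonneg (z - y), ht.1, ht.2]
    have hder : ∀ t ∈ Set.Icc (0:ℝ) 1, HasDerivAt (fun t => V (γ t))
        (fun i => ∑ k, (z - y) k * ∑ j, Q (γ t) k i j * V (γ t) j) t := by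
      intro t ht
      rw [hasDerivAt_pi]
      intro i
      have hin := hcb (hγ t ht)
      have h1 : HasDerivAt γ (z - y) t := by
        simpa [γ] using ((hasDerivAt_id t).smul_const (z - y)).const_add y
      have h2 := (SA_diffAt hU (v i) hin).hasFDerivAt.comp_hasDerivAt t h1
      refine HasDerivAt.congr_deriv (f := fun t => V (γ t) i) h2 ?_
      symm
      have h3 : z - y = ∑ k, (z - y) k • (Pi.single k (1:ℝ) : Fin n → ℝ) := by
        simpa using (pi_eq_sum_univ' (z - y))
      conv_rhs => rw [h3]
      rw [map_sum]
      refine Finset.sum_congr rfl fun k _ => ?_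
      rw [map_smul, smul_eq_mul, ← dA_apply hU k (v i) hin, ← hC k i, ← evA_apply, map_sum]
      simp [Q, V]
    have hfin := eq_zero_of_abs_deriv_le_mul_abs_self_of_eq_zero_right
      (f := fun t => V (γ t)) (a := 0) (b := 1) (K := n * (‖z - y‖ * (Fintype.card ι * M)))
      (f' := fun t i => ∑ k, (z - y) k * ∑ j, Q (γ t) k i j * V (γ t) j)
      (fun t ht => (hder t ht).continuousAt.continuousWithinAt)
      (fun t ht => (hder t ⟨ht.1, ht.2.le⟩).hasDerivWithinAt)
      (by simpa [γ] using hy)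
      (by
        intro t ht
        have hMt := hM _ (hγ t ⟨ht.1, ht.2.le⟩)
        have hM0 : 0 ≤ M := (norm_nonneg _).trans hMt
        refine (pi_norm_le_iff_of_nonneg (by positivity)).2 fun i => ?_
        have hj : ∀ k, ‖∑ j, Q (γ t) k i j * V (γ t) j‖ ≤ Fintype.card ι * (M * ‖V (γ t)‖) := by
          intro k
          refine (norm_sum_le_of_le _ (n := fun _ => M * ‖V (γ t)‖) fun j _ => ?_).trans ?_
          · rw [norm_mul]
            gcongr
            · exact ((norm_le_pi_norm _ j).trans ((norm_le_pi_norm _ i).trans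
                (norm_le_pi_norm _ k))).trans hMt
            · exact norm_le_pi_norm _ j
          · simp
        refine (norm_sum_le_of_le _
          (n := fun _ => ‖z - y‖ * (Fintype.card ι * (M * ‖V (γ t)‖))) fun k _ => ?_).trans ?_
        · rw [norm_mul]
          gcongr
          · exact norm_le_pi_norm _ k
          · exact hj k
        · simp
          apply le_of_eq; ring)
      1 (by simp)
    simpa [γ] using hfin
  intro x hx i
  by_contra hne
  obtain ⟨w, hw, hw1, hw2⟩ := hc _ _ hopen hclosed (by
      intro w hw
      by_cases h : V w = 0
      · exact Or.inl ⟨hw, h⟩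
      · exact Or.inr ⟨hw, h⟩)
    ⟨x₁, hx₁, hx₁, funext h0⟩ ⟨x, hx, hx, fun h => hne (congrFun h i)⟩
  exact hw2.2 hw1.2

theorem der_span {n : ℕ} {U : Set (Fin n → ℝ)} (hU : IsOpen U) (k : Fin n) (S : Set (SA U))
    (N : Submodule (SA U) (SA U)) (h1 : ∀ s ∈ S, s ∈ N) (h2 : ∀ s ∈ S, dA hU k s ∈ N)
    (f : SA U) (hf : f ∈ Submodule.span (SA U) S) : dA hU k f ∈ N := by
  have hle : Submodule.span (SA U) S ≤ N := Submodule.span_le.2 h1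
  induction hf using Submodule.span_induction with
  | mem s hs => exact h2 s hs
  | zero => simp
  | add a b _ _ ha hb => rw [map_add]; exact N.add_mem ha hb
  | smul a b hb ih =>
    rw [smul_eq_mul, Derivation.leibniz, smul_eq_mul]
    refine N.add_mem (N.smul_mem _ ih) ?_
    rw [smul_eq_mul, mul_comm]
    exact N.smul_mem _ (hle hb)

theorem prolong {n : ℕ} {U : Set (Fin n → ℝ)} (hU : IsOpen U)
    (t : Fin n → Fin n → SA U)
    (hK : ∀ i j k, dA hU i (t j k) + dA hU j (t i k) + dA hU k (t i j) ∈
      Submodule.span (SA U) (Set.range fun q : Fin n × Fin n => t q.1 q.2))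
    (N : Submodule (SA U) (SA U)) (h0 : ∀ i j, t i j ∈ N) (h1 : ∀ a i j, dA hU a (t i j) ∈ N)
    (h2 : ∀ a b i j, dA hU a (dA hU b (t i j)) ∈ N) (a b c j k : Fin n) :
    dA hU a (dA hU b (dA hU c (t j k))) ∈ N := by
  set S1 : Set (SA U) := {f | (∃ i j, f = t i j) ∨ ∃ a i j, f = dA hU a (t i j)}
  have key : ∀ p q i j k, dA hU p (dA hU q (dA hU i (t j k))) +
      dA hU p (dA hU q (dA hU j (t i k))) + dA hU p (dA hU q (dA hU k (t i j))) ∈ N := by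
    intro p q i j k
    have e1 : dA hU q (dA hU i (t j k) + dA hU j (t i k) + dA hU k (t i j)) ∈
        Submodule.span (SA U) S1 := by
      refine der_span hU q _ _ ?_ ?_ _ (hK i j k)
      · rintro _ ⟨⟨i, j⟩, rfl⟩
        exact Submodule.subset_span (Or.inl ⟨i, j, rfl⟩)
      · rintro _ ⟨⟨i, j⟩, rfl⟩
        exact Submodule.subset_span (Or.inr ⟨q, i, j, rfl⟩)
    have e2 := der_span hU p S1 N (by
      rintro _ (⟨i, j, rfl⟩ | ⟨a, i, j, rfl⟩)
      · exact h0 i j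
      · exact h1 a i j) (by
      rintro _ (⟨i, j, rfl⟩ | ⟨a, i, j, rfl⟩)
      · exact h1 p i j
      · exact h2 p a i j) _ e1
    simpa only [map_add] using e2
  have hs : ∀ (r : ℝ) f, f ∈ N → r • f ∈ N := fun r f hf => by
    have := N.smul_mem (algebraMap ℝ (SA U) r) hf
    rwa [algebraMap_smul] at this
  -- pairs: E_{jk}; triples
  have A1 := key b c a j k
  have A2 := key a c b j k
  have A3 := key a b c j k
  have B1 := key b k a c j
  have B2 := key a k b c j
  have B3 := key c k a b j
  have B4 := key b j a c k
  have B5 := key a j b c k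
  have B6 := key c j a b k
  have C1 := key j k a b c
  have fin := N.add_mem (N.sub_mem (hs (1/3) _ (N.add_mem A1 (N.add_mem A2 A3)))
    (hs (1/6) _ (N.add_mem B1 (N.add_mem B2 (N.add_mem B3 (N.add_mem B4 (N.add_mem B5 B6)))))))
    (hs (1/3) _ C1)
  convert fin using 1
  have cm : ∀ p q f, dA hU p (dA hU q f) = dA hU q (dA hU p f) := dA_comm hU
  simp only [cm c b, cm b a, cm c a, cm j a, cm j b, cm j c, cm k a, cm k b, cm k c, cm k j]
  module


theorem jet_mul {n : ℕ} {U : Set (Fin n → ℝ)} (hU : IsOpen U) (x : Fin n → ℝ) (g f : SA U)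
    (h0 : evA U x f = 0) (h1 : ∀ a, evA U x (dA hU a f) = 0)
    (h2 : ∀ a b, evA U x (dA hU a (dA hU b f)) = 0) :
    evA U x (g * f) = 0 ∧ (∀ a, evA U x (dA hU a (g * f)) = 0) ∧
    (∀ a b, evA U x (dA hU a (dA hU b (g * f))) = 0) := by
  refine ⟨by simp [h0], fun a => by simp [Derivation.leibniz, h0, h1], fun a b => by
    simp [Derivation.leibniz, h0, h1, h2]⟩

theorem killing_rigid {n : ℕ} {U : Set (Fin n → ℝ)} (hU : IsOpen U) (hc : IsPreconnected U)
    (G g : Matrix (Fin n) (Fin n) (SA U)) (hGg : G * g = 1) (hgG : g * G = 1)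
    (T : Fin n → Fin n → SA U)
    (hK : ∀ i j k, (∑ a, G i a * dA hU a (T j k)) + (∑ a, G j a * dA hU a (T i k)) +
      (∑ a, G k a * dA hU a (T i j)) ∈
        Submodule.span (SA U) (Set.range fun q : Fin n × Fin n => T q.1 q.2))
    {x₁ : Fin n → ℝ} (hx₁ : x₁ ∈ U) (h0 : ∀ i j, evA U x₁ (T i j) = 0)
    (h1 : ∀ a i j, evA U x₁ (dA hU a (T i j)) = 0)
    (h2 : ∀ a b i j, evA U x₁ (dA hU a (dA hU b (T i j))) = 0) :
    ∀ x ∈ U, ∀ i j, evA U x (T i j) = 0 := by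
  let t : Fin n → Fin n → SA U := fun j k => ∑ b, ∑ c, (g j b * g k c) * T b c
  set M0 := Submodule.span (SA U) (Set.range fun q : Fin n × Fin n => t q.1 q.2) with hM0
  have hGg' : ∀ i j, ∑ a, G i a * g a j = if i = j then 1 else 0 := fun i j => by
    rw [← Matrix.mul_apply, hGg, Matrix.one_apply]
  have hgG' : ∀ i j, ∑ a, g i a * G a j = if i = j then 1 else 0 := fun i j => by
    rw [← Matrix.mul_apply, hgG, Matrix.one_apply]
  have htT : ∀ b c, T b c = ∑ j, ∑ k, (G b j * G c k) * t j k := by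
    intro b c
    have key : ∀ (A B : Matrix (Fin n) (Fin n) (SA U)) j k, (A * B * Aᵀ) j k =
        ∑ b, ∑ c, (A j b * A k c) * B b c := by
      intro A B j k
      simp only [Matrix.mul_apply, Finset.sum_mul, Matrix.transpose_apply]
      rw [Finset.sum_comm]
      exact Finset.sum_congr rfl fun _ _ => Finset.sum_congr rfl fun _ _ => by ring
    have ht : Matrix.of t = g * Matrix.of T * gᵀ := by
      ext1 j k; rw [key]; rfl
    have hT : Matrix.of T = G * Matrix.of t * Gᵀ := by
      rw [ht]
      calc Matrix.of T = (G * g) * Matrix.of T * (G * g)ᵀ := by simp [hGg]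
        _ = _ := by rw [Matrix.transpose_mul]; simp only [Matrix.mul_assoc]
    have := congrFun (congrFun hT b) c
    rw [key] at this
    exact this
  have hTM0 : ∀ b c, T b c ∈ M0 := by
    intro b c
    rw [htT b c]
    refine Submodule.sum_mem _ fun j _ => Submodule.sum_mem _ fun k _ => ?_
    exact M0.smul_mem _ (Submodule.subset_span ⟨(j, k), rfl⟩)
  have hTle : Submodule.span (SA U) (Set.range fun q : Fin n × Fin n => T q.1 q.2) ≤ M0 := by
    rw [Submodule.span_le]; rintro _ ⟨⟨b, c⟩, rfl⟩; exact hTM0 b c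
  let L : Fin n → Fin n → Fin n → SA U := fun i j k =>
    ∑ b, ∑ c, (g j b * g k c) * dA hU i (T b c)
  let W : Fin n → Fin n → Fin n → SA U := fun p b c => ∑ a, G p a * dA hU a (T b c)
  have hLt : ∀ i j k, dA hU i (t j k) - L i j k ∈ M0 := by
    intro i j k
    have : dA hU i (t j k) - L i j k = ∑ b, ∑ c, dA hU i (g j b * g k c) * T b c := by
      simp only [t, L, map_sum]
      rw [← Finset.sum_sub_distrib]
      refine Finset.sum_congr rfl fun b _ => ?_
      rw [← Finset.sum_sub_distrib]
      refine Finset.sum_congr rfl fun c _ => ?_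
      rw [Derivation.leibniz, smul_eq_mul, smul_eq_mul]; ring
    rw [this]
    refine Submodule.sum_mem _ fun j _ => Submodule.sum_mem _ fun k _ => ?_
    exact M0.smul_mem _ (hTM0 _ _)
  have hLW : ∀ i j k, L i j k = ∑ b, ∑ c, ∑ p, (g i p * g j b * g k c) * W p b c := by
    intro i j k
    refine Finset.sum_congr rfl fun b _ => Finset.sum_congr rfl fun c _ => ?_
    have : ∑ p, g i p * W p b c = dA hU i (T b c) := by
      simp only [W, Finset.mul_sum]
      rw [Finset.sum_comm]
      simp only [← mul_assoc, ← Finset.sum_mul, hgG']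
      simp
    rw [← this, Finset.mul_sum]
    exact Finset.sum_congr rfl fun p _ => by ring
  have hLsum : ∀ i j k, L i j k + L j i k + L k i j ∈ M0 := by
    intro i j k
    have e1 : L i j k = ∑ p, ∑ b, ∑ c, (g i p * g j b * g k c) * W p b c := by
      rw [hLW]
      conv_rhs => rw [Finset.sum_comm]
      refine Finset.sum_congr rfl fun b _ => ?_
      rw [Finset.sum_comm]
    have e2 : L j i k = ∑ p, ∑ b, ∑ c, (g i p * g j b * g k c) * W b p c := by
      rw [hLW]
      refine Finset.sum_congr rfl fun b _ => ?_
      rw [Finset.sum_comm]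
      exact Finset.sum_congr rfl fun _ _ => Finset.sum_congr rfl fun _ _ => by ring
    have e3 : L k i j = ∑ p, ∑ b, ∑ c, (g i p * g j b * g k c) * W c p b := by
      rw [hLW]
      exact Finset.sum_congr rfl fun _ _ => Finset.sum_congr rfl fun _ _ =>
        Finset.sum_congr rfl fun _ _ => by ring
    rw [e1, e2, e3]
    simp only [← Finset.sum_add_distrib, ← mul_add]
    refine Submodule.sum_mem _ fun p _ => Submodule.sum_mem _ fun b _ =>
      Submodule.sum_mem _ fun c _ => M0.smul_mem _ (hTle (hK p b c))
  have hKt : ∀ i j k, dA hU i (t j k) + dA hU j (t i k) + dA hU k (t i j) ∈ M0 := by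
    intro i j k
    have := M0.add_mem (M0.add_mem (M0.add_mem (hLt i j k) (hLt j i k)) (hLt k i j)) (hLsum i j k)
    convert this using 1
    ring
  let v : ((Fin n × Fin n) ⊕ (Fin n × Fin n × Fin n)) ⊕ (Fin n × Fin n × Fin n × Fin n) → SA U :=
    Sum.elim (Sum.elim (fun q => t q.1 q.2) (fun q => dA hU q.1 (t q.2.1 q.2.2)))
      (fun q => dA hU q.1 (dA hU q.2.1 (t q.2.2.1 q.2.2.2)))
  have m0 : ∀ i j, t i j ∈ Submodule.span (SA U) (Set.range v) := fun i j =>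
    Submodule.subset_span ⟨Sum.inl (Sum.inl (i, j)), rfl⟩
  have m1 : ∀ a i j, dA hU a (t i j) ∈ Submodule.span (SA U) (Set.range v) := fun a i j =>
    Submodule.subset_span ⟨Sum.inl (Sum.inr (a, i, j)), rfl⟩
  have m2 : ∀ a b i j, dA hU a (dA hU b (t i j)) ∈ Submodule.span (SA U) (Set.range v) :=
    fun a b i j => Submodule.subset_span ⟨Sum.inr (a, b, i, j), rfl⟩
  have jets : ∀ i j, evA U x₁ (t i j) = 0 ∧ (∀ a, evA U x₁ (dA hU a (t i j)) = 0) ∧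
      (∀ a b, evA U x₁ (dA hU a (dA hU b (t i j))) = 0) := by
    intro i j
    have := fun b c => jet_mul hU x₁ (g i b * g j c) (T b c) (h0 b c) (fun a => h1 a b c)
      (fun a a' => h2 a a' b c)
    refine ⟨?_, fun a => ?_, fun a a' => ?_⟩
    · simp only [t, map_sum]
      exact Finset.sum_eq_zero fun b _ => Finset.sum_eq_zero fun c _ => (this b c).1
    · simp only [t, map_sum]
      exact Finset.sum_eq_zero fun b _ => Finset.sum_eq_zero fun c _ => (this b c).2.1 a
    · simp only [t, map_sum]
      exact Finset.sum_eq_zero fun b _ => Finset.sum_eq_zero fun c _ => (this b c).2.2 a a'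
  have hr := rigid hU hc v (by
      rintro k ((⟨i, j⟩ | ⟨a, i, j⟩) | ⟨a, b, i, j⟩)
      · exact m1 k i j
      · exact m2 k a i j
      · exact prolong hU t hKt _ m0 m1 m2 k a b i j) hx₁ (by
      rintro ((⟨i, j⟩ | ⟨a, i, j⟩) | ⟨a, b, i, j⟩)
      · exact (jets i j).1
      · exact (jets i j).2.1 a
      · exact (jets i j).2.2 a b)
  intro x hx i j
  rw [htT, map_sum]
  refine Finset.sum_eq_zero fun b _ => ?_
  rw [map_sum]
  refine Finset.sum_eq_zero fun c _ => ?_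
  rw [map_mul, show evA U x (t b c) = 0 from hr x hx (Sum.inl (Sum.inl (b, c))), mul_zero]


theorem polar {n : ℕ} (w : Fin n → Fin n → Fin n → ℝ) (hs : ∀ i j k, w i j k = w i k j)
    (h : ∀ p : Fin n → ℝ, ∑ i, ∑ j, ∑ k, w i j k * p i * p j * p k = 0) (i j k : Fin n) :
    w i j k + w j i k + w k i j = 0 := by
  let M : (Fin n → ℝ) → (Fin n → ℝ) → (Fin n → ℝ) → ℝ := fun p q r =>
    ∑ i, ∑ j, ∑ k, w i j k * p i * q j * r k
  have a1 : ∀ p p' q r, M (p + p') q r = M p q r + M p' q r := by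
    intro p p' q r; simp [M, mul_add, add_mul, Finset.sum_add_distrib]
  have a2 : ∀ p p' q r, M q (p + p') r = M q p r + M q p' r := by
    intro p p' q r; simp [M, mul_add, add_mul, Finset.sum_add_distrib]
  have a3 : ∀ p p' q r, M q r (p + p') = M q r p + M q r p' := by
    intro p p' q r; simp [M, mul_add, Finset.sum_add_distrib]
  have h' : ∀ p, M p p p = 0 := h
  have hM : ∀ i j k, M (Pi.single i 1) (Pi.single j 1) (Pi.single k 1) = w i j k := by
    intro i j k
    simp [M, Pi.single_apply]
  generalize M = M at *
  have key : ∀ p q r, M p q r + M p r q + M q p r + M q r p + M r p q + M r q p = 0 := by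
    intro p q r
    have e1 := h' p
    have e2 := h' q
    have e3 := h' r
    have e4 := h' (p + q)
    have e5 := h' (p + r)
    have e6 := h' (q + r)
    have e7 := h' (p + q + r)
    simp only [a1, a2, a3] at e4 e5 e6 e7
    linarith
  have := key (Pi.single i 1) (Pi.single j 1) (Pi.single k 1)
  simp only [hM] at this
  linarith [hs i j k, hs j i k, hs k i j]

theorem step1 {n : ℕ} (G B : Matrix (Fin n) (Fin n) ℝ) (hG : IsUnit G) (hB : IsUnit B)
    (S : Fin n → Matrix (Fin n) (Fin n) ℝ) (hS : ∀ a, (B * S a * Bᵀ).IsDiag)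
    (h : ∀ p : Fin n → ℝ, ∑ a, (G *ᵥ p) a * (p ⬝ᵥ (S a *ᵥ p)) = 0) (a : Fin n) : S a = 0 := by
  have h' : ∀ q : Fin n → ℝ, ∑ k, ∑ i, (∑ a, (G * Bᵀ) a k * (B * S a * Bᵀ) i i) *
      (q k * (q i * q i)) = 0 := by
    intro q
    rw [← h (Bᵀ *ᵥ q)]
    have e1 : ∀ a, (Bᵀ *ᵥ q) ⬝ᵥ (S a *ᵥ (Bᵀ *ᵥ q)) = ∑ i, (B * S a * Bᵀ) i i * (q i * q i) := by
      intro a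
      have : (Bᵀ *ᵥ q) ⬝ᵥ (S a *ᵥ (Bᵀ *ᵥ q)) = q ⬝ᵥ ((B * S a * Bᵀ) *ᵥ q) := by
        rw [Matrix.mulVec_transpose, ← Matrix.dotProduct_mulVec, Matrix.mulVec_mulVec]
        congr 1
        rw [← Matrix.mulVec_transpose, Matrix.mulVec_mulVec]
      rw [this]
      refine Finset.sum_congr rfl fun i _ => ?_
      have : ((B * S a * Bᵀ) *ᵥ q) i = (B * S a * Bᵀ) i i * q i := by
        rw [Matrix.mulVec, dotProduct]
        refine Finset.sum_eq_single i (fun j _ hj => ?_) (by simp)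
        rw [hS a hj.symm, zero_mul]
      rw [this]; ring
    have e2 : ∀ a, (G *ᵥ (Bᵀ *ᵥ q)) a = ∑ k, (G * Bᵀ) a k * q k := by
      intro a; rw [Matrix.mulVec_mulVec]; rfl
    simp only [e1, e2, Finset.sum_mul]
    conv_rhs => rw [Finset.sum_comm]
    refine Finset.sum_congr rfl fun k _ => ?_
    rw [Finset.sum_comm]
    refine Finset.sum_congr rfl fun _ _ => ?_
    rw [Finset.mul_sum]
    exact Finset.sum_congr rfl fun _ _ => by ring
  set W : Fin n → Fin n → ℝ := fun k i => ∑ a, (G * Bᵀ) a k * (B * S a * Bᵀ) i i with hWdef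
  have hW : ∀ k i, W k i = 0 := by
    have hq : ∀ q : Fin n → ℝ, ∑ k, ∑ i, W k i * (q k * (q i * q i)) = 0 := h'
    have hd : ∀ i, W i i = 0 := by
      intro i
      have := hq (Pi.single i 1)
      simpa [Pi.single_apply] using this
    intro k i
    by_cases hki : k = i
    · subst hki; exact hd k
    have ev : ∀ s : ℝ, W k k * s ^ 3 + W k i * s + W i k * s ^ 2 + W i i = 0 := by
      intro s
      have := hq (Pi.single k s + Pi.single i 1)
      rw [← this]
      have f : ∀ g : Fin n → ℝ, (∀ j, j ≠ k → j ≠ i → g j = 0) → ∑ j, g j = g k + g i := by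
        intro g hg
        rw [← Finset.sum_pair hki]
        symm
        apply Finset.sum_subset (Finset.subset_univ _)
        intro j _ hj
        simp at hj
        exact hg j hj.1 hj.2
      have hki' : i ≠ k := fun h => hki h.symm
      rw [f]
      · rw [f, f]
        · simp [hki, hki']; ring
        · intro j h1 h2; simp [h1, h2]
        · intro j h1 h2; simp [h1, h2]
      · intro j h1 h2; simp [h1, h2]
    have e1 := ev 1
    have e2 := ev (-1)
    have e3 := hd i
    have e4 := hd k
    norm_num at e1 e2
    linarith
  have hGB : IsUnit (G * Bᵀ) := hG.mul ((Matrix.isUnit_transpose (A := B)).2 hB)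
  have hz : ∀ i, (fun a => (B * S a * Bᵀ) i i) = 0 := by
    intro i
    have h1 : (fun a => (B * S a * Bᵀ) i i) ᵥ* (G * Bᵀ) = 0 := by
      funext k
      rw [Pi.zero_apply, ← hW k i]
      simp only [Matrix.vecMul, dotProduct, hWdef]
      exact Finset.sum_congr rfl fun _ _ => by ring
    have := Matrix.vecMul_injective_of_isUnit hGB
    exact this (by simpa using h1)
  have h0 : B * S a * Bᵀ = 0 := by
    ext i j
    by_cases hij : i = j
    · subst hij; exact congrFun (hz i) a
    · exact hS a hij
  have hBt : IsUnit Bᵀ := (Matrix.isUnit_transpose (A := B)).2 hB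
  exact (hB.mul_right_eq_zero.1 (hBt.mul_left_eq_zero.1 h0))

theorem fin_step (m : ℕ) (K : Fin (m + 1) → Matrix (Fin (m + 1)) (Fin (m + 1)) ℝ)
    (hG : IsUnit (K 0)) (B : Matrix (Fin (m + 1)) (Fin (m + 1)) ℝ) (hB : IsUnit B)
    (hD : ∀ α, (B * K α * Bᵀ).IsDiag)
    (hli : ∀ c : Fin (m + 1) → ℝ, (∀ i j, ∑ α, K α i j * c α = 0) → c = 0) :
    (IsOpen {lam : Fin m → ℝ |
          ∃ d : Fin (m + 1) → ℝ, Function.Injective d ∧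
            ((∑ β : Fin m, lam β • K β.succ) * (K 0)⁻¹).charpoly
              = ∏ i : Fin (m + 1), (X - C (d i))} ∧
        Dense {lam : Fin m → ℝ |
          ∃ d : Fin (m + 1) → ℝ, Function.Injective d ∧
            ((∑ β : Fin m, lam β • K β.succ) * (K 0)⁻¹).charpoly
              = ∏ i : Fin (m + 1), (X - C (d i))}) := by
  have hBt : IsUnit Bᵀ := (Matrix.isUnit_transpose (A := B)).2 hB
  choose D hDD using fun α => (Matrix.isDiag_iff_diagonal_diag _).1 (hD α) |>.symm |> fun h =>
    (⟨_, h⟩ : ∃ D, B * K α * Bᵀ = diagonal D)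
  have hD0 : ∀ i, D 0 i ≠ 0 := by
    have : IsUnit (diagonal (D 0)) := by rw [← hDD]; exact (hB.mul hG).mul hBt
    rw [Matrix.isUnit_iff_isUnit_det, Matrix.det_diagonal, isUnit_iff_ne_zero,
      Finset.prod_ne_zero_iff] at this
    exact fun i => this i (Finset.mem_univ i)
  have hdB : IsUnit B.det := (Matrix.isUnit_iff_isUnit_det _).1 hB
  have hdBt : IsUnit Bᵀ.det := (Matrix.isUnit_iff_isUnit_det _).1 hBt
  have hKD : ∀ α, K α = B⁻¹ * diagonal (D α) * Bᵀ⁻¹ := by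
    intro α
    rw [← hDD, ← Matrix.mul_assoc, ← Matrix.mul_assoc, Matrix.nonsing_inv_mul _ hdB,
      Matrix.one_mul, Matrix.mul_assoc, Matrix.mul_nonsing_inv _ hdBt, Matrix.mul_one]
  have hK0 : (K 0)⁻¹ = Bᵀ * diagonal (fun i => (D 0 i)⁻¹) * B := by
    apply Matrix.inv_eq_right_inv
    rw [hKD]
    calc _ = B⁻¹ * (diagonal (D 0) * ((Bᵀ⁻¹ * Bᵀ) * diagonal (fun i => (D 0 i)⁻¹))) * B := by
          simp only [Matrix.mul_assoc]
      _ = 1 := by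
          rw [Matrix.nonsing_inv_mul _ hdBt, Matrix.one_mul, Matrix.diagonal_mul_diagonal]
          have : (fun i => D 0 i * (D 0 i)⁻¹) = fun _ => (1:ℝ) :=
            funext fun i => mul_inv_cancel₀ (hD0 i)
          rw [this, Matrix.diagonal_one, Matrix.mul_one, Matrix.nonsing_inv_mul _ hdB]
  let e : (Fin m → ℝ) → Fin (m + 1) → ℝ := fun lam i => ∑ β, lam β * (D β.succ i / D 0 i)
  have hmat : ∀ lam : Fin m → ℝ, (∑ β : Fin m, lam β • K β.succ) * (K 0)⁻¹ =
      B⁻¹ * diagonal (e lam) * B := by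
    intro lam
    rw [hK0, Finset.sum_mul]
    have : ∀ β : Fin m, lam β • K β.succ * (Bᵀ * diagonal (fun i => (D 0 i)⁻¹) * B) =
        B⁻¹ * (lam β • diagonal (fun i => D β.succ i / D 0 i)) * B := by
      intro β
      rw [hKD]
      calc _ = lam β • (B⁻¹ * (diagonal (D β.succ) * ((Bᵀ⁻¹ * Bᵀ) * diagonal (fun i => (D 0 i)⁻¹))) * B) := by
            simp only [Matrix.mul_assoc, Matrix.smul_mul]
        _ = _ := by
            rw [Matrix.nonsing_inv_mul _ hdBt, Matrix.one_mul, Matrix.diagonal_mul_diagonal]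
            simp only [Matrix.mul_smul, Matrix.smul_mul, div_eq_mul_inv]
    rw [Finset.sum_congr rfl fun β _ => this β, ← Finset.sum_mul, ← Finset.mul_sum]
    congr 2
    ext i j
    by_cases hij : i = j
    · subst hij; simp [Matrix.sum_apply, e]
    · simp [Matrix.sum_apply, hij]
  have hchar : ∀ lam : Fin m → ℝ, ((∑ β : Fin m, lam β • K β.succ) * (K 0)⁻¹).charpoly =
      ∏ i, (X - C (e lam i)) := by
    intro lam
    rw [hmat, Matrix.charpoly_mul_comm, ← Matrix.mul_assoc, Matrix.mul_nonsing_inv _ hdB,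
      Matrix.one_mul, Matrix.charpoly_diagonal]
  have hset : {lam : Fin m → ℝ |
          ∃ d : Fin (m + 1) → ℝ, Function.Injective d ∧
            ((∑ β : Fin m, lam β • K β.succ) * (K 0)⁻¹).charpoly
              = ∏ i : Fin (m + 1), (X - C (d i))} =
      ⋂ q : {q : Fin (m+1) × Fin (m+1) // q.1 ≠ q.2}, {lam | e lam q.1.1 ≠ e lam q.1.2} := by
    ext lam
    simp only [Set.mem_ofPred_eq, hchar, Set.mem_iInter]
    constructor
    · rintro ⟨d, hd, h⟩ ⟨⟨i, j⟩, hij⟩ he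
      rw [← separable_prod_X_sub_C_iff, ← h, separable_prod_X_sub_C_iff] at hd
      exact hij (hd he)
    · intro h
      refine ⟨e lam, fun i j hij => ?_, rfl⟩
      by_contra hne
      exact h ⟨(i, j), hne⟩ hij
  rw [hset]
  have hlin : ∀ i j, i ≠ j → ∃ β : Fin m, D β.succ i / D 0 i ≠ D β.succ j / D 0 j := by
    intro i j hij
    by_contra! hall
    let Mx : Matrix (Fin (m+1)) (Fin (m+1)) ℝ := fun α i => D α i / D 0 i
    have hdet : Mx.det = 0 := by
      apply Matrix.det_zero_of_column_eq hij
      intro α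
      refine Fin.cases ?_ (fun β => hall β) α
      simp [Mx, hD0]
    obtain ⟨c, hc, hc0⟩ := Matrix.exists_vecMul_eq_zero_iff.2 hdet
    apply hc
    apply hli
    have hdiag : ∑ α, c α • diagonal (D α) = 0 := by
      ext k l
      by_cases hkl : k = l
      · subst hkl
        have := congrFun hc0 k
        simp only [Matrix.vecMul, dotProduct, Mx, Pi.zero_apply] at this
        simp only [Matrix.sum_apply, Matrix.smul_apply, Matrix.diagonal_apply_eq, smul_eq_mul,
          Matrix.zero_apply]
        have h2 : ∑ α, c α * D α k = (∑ α, c α * (D α k / D 0 k)) * D 0 k := by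
          rw [Finset.sum_mul]
          refine Finset.sum_congr rfl fun α _ => ?_
          have := hD0 k
          field_simp
        rw [h2, this, zero_mul]
      · simp [Matrix.sum_apply, hkl]
    have hsum : ∑ α, c α • K α = 0 := by
      calc ∑ α, c α • K α = B⁻¹ * (∑ α, c α • diagonal (D α)) * Bᵀ⁻¹ := by
            rw [Finset.mul_sum, Finset.sum_mul]
            refine Finset.sum_congr rfl fun α _ => ?_
            rw [hKD α, Matrix.mul_smul, Matrix.smul_mul]
        _ = 0 := by rw [hdiag]; simp
    intro k l
    have := congrFun (congrFun hsum k) l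
    simp only [Matrix.sum_apply, Matrix.smul_apply, smul_eq_mul, Matrix.zero_apply] at this
    rw [← this]
    exact Finset.sum_congr rfl fun _ _ => mul_comm _ _
  have hcont : ∀ i, Continuous fun lam => e lam i := fun i => by fun_prop
  have hop : ∀ q : {q : Fin (m+1) × Fin (m+1) // q.1 ≠ q.2},
      IsOpen {lam | e lam q.1.1 ≠ e lam q.1.2} := fun q =>
    isOpen_ne_fun (hcont _) (hcont _)
  refine ⟨isOpen_iInter_of_finite hop, dense_iInter_of_isOpen hop ?_⟩
  rintro ⟨⟨i, j⟩, hij⟩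
  obtain ⟨β, hβ⟩ := hlin i j hij
  let Φ : Submodule ℝ (Fin m → ℝ) :=
    { carrier := {lam | e lam i = e lam j}
      add_mem' := by
        intro a b ha hb
        simp only [Set.mem_ofPred_eq, e, Pi.add_apply, add_mul, Finset.sum_add_distrib] at *
        rw [ha, hb]
      zero_mem' := by simp [e]
      smul_mem' := by
        intro r a ha
        simp only [Set.mem_ofPred_eq, e, Pi.smul_apply, smul_eq_mul, mul_assoc,
          ← Finset.mul_sum] at *
        rw [ha] }
  have hcompl : {lam | e lam i ≠ e lam j} = (Φ : Set (Fin m → ℝ))ᶜ := rfl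
  show Dense {lam | e lam i ≠ e lam j}
  rw [hcompl, ← interior_eq_empty_iff_dense_compl]
  by_contra hne
  have htop := Φ.eq_top_of_nonempty_interior' (Set.nonempty_iff_ne_empty.2 hne)
  have hmem : (Pi.single β 1 : Fin m → ℝ) ∈ Φ := by rw [htop]; trivial
  have : e (Pi.single β 1) i = e (Pi.single β 1) j := hmem
  simp [e, Pi.single_apply] at this
  exact hβ this

theorem fderiv_quad {n : ℕ} (f : Fin n → Fin n → (Fin n → ℝ) → ℝ)
    (z : (Fin n → ℝ) × (Fin n → ℝ)) (hf : ∀ i j, DifferentiableAt ℝ (f i j) z.1) :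
    DifferentiableAt ℝ (fun z : (Fin n → ℝ) × (Fin n → ℝ) =>
      ∑ i, ∑ j, f i j z.1 * z.2 i * z.2 j) z ∧
    ∀ u w, fderiv ℝ (fun z : (Fin n → ℝ) × (Fin n → ℝ) =>
      ∑ i, ∑ j, f i j z.1 * z.2 i * z.2 j) z (u, w) =
      ∑ i, ∑ j, (fderiv ℝ (f i j) z.1 u * z.2 i * z.2 j + f i j z.1 * w i * z.2 j +
        f i j z.1 * z.2 i * w j) := by
  have hp : ∀ i, HasFDerivAt (fun z : (Fin n → ℝ) × (Fin n → ℝ) => z.2 i)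
      ((ContinuousLinearMap.proj i).comp (ContinuousLinearMap.snd ℝ (Fin n → ℝ) (Fin n → ℝ))) z :=
    fun i => ((ContinuousLinearMap.proj (R := ℝ) (φ := fun _ : Fin n => ℝ) i).comp
      (ContinuousLinearMap.snd ℝ (Fin n → ℝ) (Fin n → ℝ))).hasFDerivAt
  have hq : ∀ i j, HasFDerivAt (fun z : (Fin n → ℝ) × (Fin n → ℝ) => f i j z.1)
      ((fderiv ℝ (f i j) z.1).comp (ContinuousLinearMap.fst ℝ (Fin n → ℝ) (Fin n → ℝ))) z :=
    fun i j => HasFDerivAt.comp z (hf i j).hasFDerivAt hasFDerivAt_fst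
  have hsum := HasFDerivAt.fun_sum (u := Finset.univ) fun i _ =>
    HasFDerivAt.fun_sum (u := Finset.univ) fun j _ => ((hq i j).mul (hp i)).mul (hp j)
  refine ⟨hsum.differentiableAt, fun u w => ?_⟩
  have h2 := hsum.fderiv
  have h3 := congrArg (fun L => L (u, w)) h2
  refine h3.trans ?_
  simp only [_root_.sum_apply]
  refine Finset.sum_congr rfl fun i _ => Finset.sum_congr rfl fun j _ => ?_
  simp
  ring

theorem unit_SA {n : ℕ} {U : Set (Fin n → ℝ)} (f : SA U)
    (hf : ∀ x, evA U x f ≠ 0) : IsUnit f := by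
  have h : ContDiffOn ℝ (⊤ : ℕ∞) (f : (Fin n → ℝ) → ℝ) U := f.2
  refine IsUnit.of_mul_eq_one ⟨fun x => ((f : (Fin n → ℝ) → ℝ) x)⁻¹, h.inv fun x _ => hf x⟩ ?_
  ext x
  exact mul_inv_cancel₀ (hf x)

theorem stmt1 (m : ℕ)
    (U : Set (Fin (m + 1) → ℝ)) (hUopen : IsOpen U) (hUconn : IsConnected U)
    (K : Fin (m + 1) → (Fin (m + 1) → ℝ) → Matrix (Fin (m + 1)) (Fin (m + 1)) ℝ)
    (hKsmooth : ∀ α i j, ContDiffOn ℝ (⊤ : ℕ∞) (fun x => K α x i j) U)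
    (hKsymm : ∀ α, ∀ x ∈ U, (K α x).IsSymm)
    (hGinv : ∀ x ∈ U, IsUnit (K 0 x))
    (I : Fin (m + 1) → (Fin (m + 1) → ℝ) × (Fin (m + 1) → ℝ) → ℝ)
    (hI : ∀ α, I α = fun z =>
      ∑ i : Fin (m + 1), ∑ j : Fin (m + 1), K α z.1 i j * z.2 i * z.2 j)
    (H : (Fin (m + 1) → ℝ) × (Fin (m + 1) → ℝ) → ℝ)
    (hH : H = fun z => (1 / 2 : ℝ) * I 0 z)
    -- (1) each `I α` is an integral of the geodesic flow
    (h1 : ∀ α, ∀ z : (Fin (m + 1) → ℝ) × (Fin (m + 1) → ℝ), z.1 ∈ U →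
      poisson H (I α) z = 0)
    -- (2) simultaneous diagonalisability at almost every point
    (h2 : ∀ᵐ x ∂(volume : Measure (Fin (m + 1) → ℝ)), x ∈ U →
      ∃ B : Matrix (Fin (m + 1)) (Fin (m + 1)) ℝ, IsUnit B ∧
        ∀ α, (B * K α x * Bᵀ).IsDiag)
    -- (3) the differentials of the integrals are linearly independent at some point
    (h3 : ∃ z : (Fin (m + 1) → ℝ) × (Fin (m + 1) → ℝ), z.1 ∈ U ∧
      LinearIndependent ℝ (fun α => fderiv ℝ (I α) z)) :
    ∀ᵐ x ∂(volume : Measure (Fin (m + 1) → ℝ)), x ∈ U →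
      (IsOpen {lam : Fin m → ℝ |
          ∃ d : Fin (m + 1) → ℝ, Function.Injective d ∧
            ((∑ β : Fin m, lam β • K β.succ x) * (K 0 x)⁻¹).charpoly
              = ∏ i : Fin (m + 1), (X - C (d i))} ∧
        Dense {lam : Fin m → ℝ |
          ∃ d : Fin (m + 1) → ℝ, Function.Injective d ∧
            ((∑ β : Fin m, lam β • K β.succ x) * (K 0 x)⁻¹).charpoly
              = ∏ i : Fin (m + 1), (X - C (d i))}) := by
  classical
  -- differentiability of the integrals
  have hKd : ∀ α i j, ∀ x ∈ U, DifferentiableAt ℝ (fun x => K α x i j) x := fun α i j x hx =>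
    ((hKsmooth α i j).contDiffAt (hUopen.mem_nhds hx)).differentiableAt (by simp)
  have hId : ∀ α, ∀ z : (Fin (m + 1) → ℝ) × (Fin (m + 1) → ℝ), z.1 ∈ U →
      DifferentiableAt ℝ (I α) z := by
    intro α z hz
    rw [hI]
    exact (fderiv_quad (fun i j x => K α x i j) z fun i j => hKd α i j _ hz).1
  -- the Killing equation
  have hkil0 : ∀ α, ∀ x ∈ U, ∀ p : Fin (m + 1) → ℝ,
      ∑ a, (∑ i, K 0 x a i * p i) *
        (∑ j, ∑ k, fderiv ℝ (fun x => K α x j k) x (Pi.single a 1) * p j * p k) =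
      ∑ a, (∑ i, K α x a i * p i) *
        (∑ j, ∑ k, fderiv ℝ (fun x => K 0 x j k) x (Pi.single a 1) * p j * p k) := by
    intro α x hx p
    have hq : ∀ α a, fderiv ℝ (I α) (x, p) (Pi.single a 1, 0) =
        ∑ j, ∑ k, fderiv ℝ (fun x => K α x j k) x (Pi.single a 1) * p j * p k := by
      intro α a
      rw [hI, (fderiv_quad (fun i j x => K α x i j) (x, p) fun i j => hKd α i j _ hx).2]
      simp
    have hp : ∀ α a, fderiv ℝ (I α) (x, p) (0, Pi.single a 1) =
        2 * ∑ i, K α x a i * p i := by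
      intro α a
      rw [hI, (fderiv_quad (fun i j x => K α x i j) (x, p) fun i j => hKd α i j _ hx).2]
      simp only [map_zero, zero_mul, zero_add, Finset.sum_add_distrib, Pi.single_apply,
        mul_ite, mul_one, mul_zero, ite_mul, Finset.sum_ite_eq', Finset.mem_univ, if_true]
      rw [Finset.sum_comm]
      simp only [Finset.sum_ite_eq', Finset.mem_univ, if_true]
      rw [two_mul]
      congr 1
      exact Finset.sum_congr rfl fun i _ => by rw [(hKsymm α x hx).apply]
    have hz := h1 α (x, p) hx
    have hHd : fderiv ℝ H (x, p) = (1 / 2 : ℝ) • fderiv ℝ (I 0) (x, p) := by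
      rw [hH]; exact fderiv_const_mul (hId 0 (x, p) hx) _
    simp only [poisson, hHd, _root_.smul_apply, hq, hp, smul_eq_mul] at hz
    rw [Finset.sum_sub_distrib, sub_eq_zero] at hz
    rw [← Finset.sum_congr rfl fun a _ => ?_, ← hz, Finset.sum_congr rfl fun a _ => ?_]
    · ring
    · ring
  -- the smooth matrices
  let KA : Fin (m + 1) → Fin (m + 1) → Fin (m + 1) → SA U := fun α i j =>
    ⟨fun x => if x ∈ U then K α x i j else if α = 0 then (1 : Matrix _ _ ℝ) i j else 0,
      (hKsmooth α i j).congr fun x hx => by simp [hx]⟩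
  have evK : ∀ α i j, ∀ x ∈ U, evA U x (KA α i j) = K α x i j := fun α i j x hx => by
    simp [KA, evA_apply, hx]
  have evK0 : ∀ i j, ∀ x ∉ U, evA U x (KA 0 i j) = (1 : Matrix _ _ ℝ) i j := fun i j x hx => by
    simp [KA, evA_apply, hx]
  have evdK : ∀ a α i j, ∀ x ∈ U, evA U x (dA hUopen a (KA α i j)) =
      fderiv ℝ (fun x => K α x i j) x (Pi.single a 1) := by
    intro a α i j x hx
    rw [evA_apply, dA_apply hUopen a _ hx]
    congr 1
    apply Filter.EventuallyEq.fderiv_eq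
    filter_upwards [hUopen.mem_nhds hx] with y hy using evK α i j y hy
  have hsymA : ∀ α i j, KA α i j = KA α j i := by
    intro α i j
    ext x
    by_cases hx : x ∈ U
    · have := (hKsymm α x hx).apply i j
      simp [KA, hx, this]
    · simp [KA, hx, Matrix.one_apply, eq_comm]
  have hkil : ∀ α, ∀ x ∈ U, ∀ p : Fin (m + 1) → ℝ,
      ∑ a, (∑ i, evA U x (KA 0 a i) * p i) *
        (∑ j, ∑ k, evA U x (dA hUopen a (KA α j k)) * p j * p k) =
      ∑ a, (∑ i, evA U x (KA α a i) * p i) *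
        (∑ j, ∑ k, evA U x (dA hUopen a (KA 0 j k)) * p j * p k) := by
    intro α x hx p
    simp only [evK _ _ _ x hx, evdK _ _ _ _ x hx]
    exact hkil0 α x hx p
  have hkilA : ∀ α i j k, ((∑ a, KA 0 i a * dA hUopen a (KA α j k)) +
      (∑ a, KA 0 j a * dA hUopen a (KA α i k)) + (∑ a, KA 0 k a * dA hUopen a (KA α i j))) -
      ((∑ a, KA α i a * dA hUopen a (KA 0 j k)) +
      (∑ a, KA α j a * dA hUopen a (KA 0 i k)) + (∑ a, KA α k a * dA hUopen a (KA 0 i j))) = 0 := by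
    intro α i j k
    ext x
    rw [← evA_apply, ← evA_apply, map_zero]
    by_cases hx : x ∈ U
    · have hpol := polar (fun i j k => ∑ a, (evA U x (KA 0 i a) * evA U x (dA hUopen a (KA α j k)) -
        evA U x (KA α i a) * evA U x (dA hUopen a (KA 0 j k)))) (by
          intro i j k
          simp only [hsymA _ j k]) (by
          intro p
          have h := hkil α x hx p
          rw [← sub_eq_zero, ← Finset.sum_sub_distrib] at h
          rw [← h]
          simp only [Finset.sum_mul, Finset.mul_sum, ← Finset.sum_sub_distrib]
          conv_lhs => rw [Finset.sum_comm]
          conv_rhs => rw [Finset.sum_comm]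
          refine Finset.sum_congr rfl fun j _ => ?_
          conv_lhs => rw [Finset.sum_comm]
          conv_rhs => rw [Finset.sum_comm]
          refine Finset.sum_congr rfl fun k _ => ?_
          conv_rhs => rw [Finset.sum_comm]
          refine Finset.sum_congr rfl fun i _ => Finset.sum_congr rfl fun a _ => ?_
          rw [hsymA 0 i a, hsymA α i a]
          ring) i j k
      simp only [map_sub, map_add, map_sum, map_mul]
      simp only [Finset.sum_sub_distrib] at hpol
      linarith
    · have : ∀ a f, evA U x (dA hUopen a f) = 0 := fun a f => dA_off hUopen a f hx
      simp [this]
  -- inverse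
  let GA : Matrix (Fin (m + 1)) (Fin (m + 1)) (SA U) := KA 0
  have hGAu : IsUnit GA.det := by
    apply unit_SA
    intro x
    have e : evA U x GA.det = (GA.map (evA U x)).det := (evA U x).map_det GA
    rw [e]
    by_cases hx : x ∈ U
    · have : GA.map (evA U x) = K 0 x := by
        ext i j; exact evK 0 i j x hx
      rw [this]
      exact ((Matrix.isUnit_iff_isUnit_det _).1 (hGinv x hx)).ne_zero
    · have : GA.map (evA U x) = 1 := by
        ext i j; exact evK0 i j x hx
      rw [this]; simp
  -- global: no constant linear relation with vanishing two-jet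
  have hglob : ∀ x ∈ U, ∀ c : Fin (m + 1) → ℝ,
      (∀ i j, ∑ α, evA U x (KA α i j) * c α = 0) →
      (∀ a i j, ∑ α, evA U x (dA hUopen a (KA α i j)) * c α = 0) →
      (∀ a b i j, ∑ α, evA U x (dA hUopen a (dA hUopen b (KA α i j))) * c α = 0) → c = 0 := by
    intro x hx c c0 c1 c2
    let T : Fin (m + 1) → Fin (m + 1) → SA U := fun i j => ∑ α, c α • KA α i j
    have hTK : ∀ i j k, ((∑ a, GA i a * dA hUopen a (T j k)) +
        (∑ a, GA j a * dA hUopen a (T i k)) + (∑ a, GA k a * dA hUopen a (T i j))) =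
        ((∑ a, T i a * dA hUopen a (KA 0 j k)) +
        (∑ a, T j a * dA hUopen a (KA 0 i k)) + (∑ a, T k a * dA hUopen a (KA 0 i j))) := by
      intro i j k
      let Λ : (Fin (m + 1) → Fin (m + 1) → SA U) →ₗ[ℝ] SA U :=
        { toFun := fun S => ((∑ a, KA 0 i a * dA hUopen a (S j k)) +
            (∑ a, KA 0 j a * dA hUopen a (S i k)) + (∑ a, KA 0 k a * dA hUopen a (S i j))) -
            ((∑ a, S i a * dA hUopen a (KA 0 j k)) +
            (∑ a, S j a * dA hUopen a (KA 0 i k)) + (∑ a, S k a * dA hUopen a (KA 0 i j)))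
          map_add' := by
            intro S S'
            simp only [Pi.add_apply, map_add, mul_add, add_mul, Finset.sum_add_distrib]
            ring
          map_smul' := by
            intro r S
            simp only [Pi.smul_apply, Derivation.map_smul, mul_smul_comm, smul_mul_assoc, ← Finset.smul_sum,
              ← smul_add, ← smul_sub, RingHom.id_apply] }
      have hT : T = ∑ α, c α • KA α := by
        funext i j; simp [T, Finset.sum_apply]
      have : Λ T = 0 := by
        rw [hT, map_sum]
        refine Finset.sum_eq_zero fun α _ => ?_
        rw [map_smul, show Λ (KA α) = 0 from hkilA α i j k, smul_zero]
      exact sub_eq_zero.1 this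
    have hmemT : ∀ i j, T i j ∈ Submodule.span (SA U)
        (Set.range fun q : Fin (m + 1) × Fin (m + 1) => T q.1 q.2) := fun i j =>
      Submodule.subset_span ⟨(i, j), rfl⟩
    have hz := killing_rigid hUopen hUconn.isPreconnected GA GA⁻¹
      (Matrix.mul_nonsing_inv _ hGAu) (Matrix.nonsing_inv_mul _ hGAu) T (by
        intro i j k
        rw [hTK]
        refine Submodule.add_mem _ (Submodule.add_mem _ ?_ ?_) ?_ <;>
        · refine Submodule.sum_mem _ fun a _ => ?_
          rw [mul_comm]
          exact Submodule.smul_mem _ _ (hmemT _ _)) hx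
      (by intro i j; rw [← c0 i j]; simp [T, mul_comm])
      (by intro a i j; rw [← c1 a i j]; simp [T, mul_comm])
      (by intro a b i j; rw [← c2 a b i j]; simp [T, mul_comm])
    obtain ⟨z, hzU, hli⟩ := h3
    have hlin : ∑ α, c α • fderiv ℝ (I α) z = 0 := by
      have hd := HasFDerivAt.fun_sum (u := Finset.univ) fun α _ =>
        (hId α z hzU).hasFDerivAt.const_smul (c α)
      have he : (fun y => ∑ α, (c α • I α) y) =ᶠ[nhds z] fun _ => 0 := by
        have : (Prod.fst ⁻¹' U : Set ((Fin (m + 1) → ℝ) × (Fin (m + 1) → ℝ))) ∈ nhds z :=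
          (hUopen.preimage continuous_fst).mem_nhds hzU
        filter_upwards [this] with y hy
        have hy0 : ∀ i j, ∑ α, c α * K α y.1 i j = 0 := by
          intro i j
          rw [← hz y.1 hy i j]
          simp only [T, map_sum, map_smul, smul_eq_mul]
          exact Finset.sum_congr rfl fun α _ => by rw [evK _ _ _ _ hy]
        simp only [Pi.smul_apply, hI, smul_eq_mul, Finset.mul_sum]
        rw [Finset.sum_comm]
        refine Finset.sum_eq_zero fun i _ => ?_
        rw [Finset.sum_comm]
        refine Finset.sum_eq_zero fun j _ => ?_
        have := congrArg (fun r => r * y.2 i * y.2 j) (hy0 i j)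
        simp only [Finset.sum_mul, zero_mul] at this
        rw [← this]
        exact Finset.sum_congr rfl fun α _ => by ring
      have h5 := hd.fderiv
      rw [he.fderiv_eq] at h5
      simpa using h5.symm
    exact funext fun α => Fintype.linearIndependent_iff.1 hli c hlin α
  -- almost everywhere
  let P0 : Matrix (Fin (m + 1) × Fin (m + 1)) (Fin (m + 1)) (SA U) := fun q α => KA α q.1 q.2
  let P1 : Matrix ((Fin (m + 1) × Fin (m + 1)) ⊕ (Fin (m + 1) × Fin (m + 1) × Fin (m + 1)))
    (Fin (m + 1)) (SA U) := fun q α =>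
      Sum.elim (fun q => KA α q.1 q.2) (fun q => dA hUopen q.1 (KA α q.2.1 q.2.2)) q
  filter_upwards [h2, lemL hUopen P0, lemL hUopen P1] with x hB hP0 hP1 hx
  obtain ⟨B, hBu, hBd⟩ := hB hx
  refine fin_step m (fun α => K α x) (hGinv x hx) B hBu hBd fun c hc => ?_
  have ker1 : ∀ c : Fin (m + 1) → ℝ, (∀ i j, ∑ α, evA U x (KA α i j) * c α = 0) →
      (∀ a i j, ∑ α, evA U x (dA hUopen a (KA α i j)) * c α = 0) := by
    intro c hc
    have := hP0 hx c (fun q => hc q.1 q.2)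
    choose c' hc' using this
    let S : Fin (m + 1) → Matrix (Fin (m + 1)) (Fin (m + 1)) ℝ := fun a => ∑ α, c' a α • K α x
    have hSe : ∀ a i j, S a i j = ∑ α, evA U x (dA hUopen a (KA α i j)) * c α := by
      intro a i j
      rw [hc' a (i, j)]
      simp only [S, Matrix.sum_apply, Matrix.smul_apply, smul_eq_mul]
      exact Finset.sum_congr rfl fun α _ => by rw [mul_comm, ← evK α i j x hx]
    have hS0 := step1 (K 0 x) B (hGinv x hx) hBu S (by
      intro a i j hij
      simp only [S, Finset.mul_sum, Finset.sum_mul, Matrix.sum_apply, Matrix.mul_smul,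
        Matrix.smul_mul, Matrix.smul_apply]
      exact Finset.sum_eq_zero fun α _ => by rw [hBd α hij, smul_zero]) (by
      intro p
      have hsum : ∑ α, (∑ a, (∑ i, evA U x (KA 0 a i) * p i) *
          (∑ j, ∑ k, evA U x (dA hUopen a (KA α j k)) * p j * p k)) * c α =
          ∑ α, (∑ a, (∑ i, evA U x (KA α a i) * p i) *
          (∑ j, ∑ k, evA U x (dA hUopen a (KA 0 j k)) * p j * p k)) * c α :=
        Finset.sum_congr rfl fun α _ => by rw [hkil α x hx p]
      have hr : ∑ α, (∑ a, (∑ i, evA U x (KA α a i) * p i) *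
          (∑ j, ∑ k, evA U x (dA hUopen a (KA 0 j k)) * p j * p k)) * c α = 0 := by
        simp only [Finset.sum_mul]
        rw [Finset.sum_comm]
        refine Finset.sum_eq_zero fun a _ => ?_
        rw [Finset.sum_comm]
        refine Finset.sum_eq_zero fun i _ => ?_
        have := congrArg (fun r => r * (p i *
          (∑ j, ∑ k, evA U x (dA hUopen a (KA 0 j k)) * p j * p k))) (hc a i)
        simp only [Finset.sum_mul, zero_mul] at this
        rw [← this]
        exact Finset.sum_congr rfl fun α _ => by ring
      rw [hr] at hsum
      rw [← hsum]
      conv_rhs => rw [Finset.sum_congr rfl fun α _ => Finset.sum_mul _ _ _, Finset.sum_comm]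
      refine Finset.sum_congr rfl fun a _ => ?_
      have e1 : (K 0 x *ᵥ p) a = ∑ i, evA U x (KA 0 a i) * p i := by
        simp only [Matrix.mulVec, dotProduct]
        exact Finset.sum_congr rfl fun i _ => by rw [evK 0 a i x hx]
      rw [e1]
      have e2 : p ⬝ᵥ (S a *ᵥ p) =
          ∑ α, (∑ j, ∑ k, evA U x (dA hUopen a (KA α j k)) * p j * p k) * c α := by
        simp only [Matrix.mulVec, dotProduct, hSe, Finset.sum_mul, Finset.mul_sum]
        conv_rhs => rw [Finset.sum_comm]
        refine Finset.sum_congr rfl fun j _ => ?_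
        conv_rhs => rw [Finset.sum_comm]
        exact Finset.sum_congr rfl fun k _ => Finset.sum_congr rfl fun α _ => by ring
      rw [e2, Finset.mul_sum]
      exact Finset.sum_congr rfl fun α _ => by ring)
    intro a i j
    rw [← hSe, hS0 a]; rfl
  have hc0 : ∀ i j, ∑ α, evA U x (KA α i j) * c α = 0 := by
    intro i j
    rw [← hc i j]
    exact Finset.sum_congr rfl fun α _ => by rw [evK α i j x hx]
  have hc1 := ker1 c hc0
  refine hglob x hx c hc0 hc1 ?_
  intro a b i j
  obtain ⟨c', hc'⟩ := hP1 hx c (by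
    rintro (⟨i, j⟩ | ⟨b, i, j⟩)
    · exact hc0 i j
    · exact hc1 b i j) a
  have hc'0 : ∀ i j, ∑ α, evA U x (KA α i j) * c' α = 0 := by
    intro i j
    have := hc' (Sum.inl (i, j))
    exact this.symm.trans (hc1 a i j)
  exact (hc' (Sum.inr (b, i, j))).trans (ker1 c' hc'0 b i j)
end
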